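/- arXiv:2312.15531 — 3 statements merged into one kernel-verified Lean document; each statement's English description precedes it below -/
import Mathlib

section
/- Let t0 > 0, and let b : [t0,∞) → ℝ be a measurable function such that m/t ≤ b(t) ≤ M/t for every t ≥ t0, where M ≥ m > 0 are real constants. Then for every λ > 0, every solution u of the damped oscillator equation u'' + b(t)u' + λ²u = 0 satisfies u'(t)² + λ²u(t)² ≤ exp(m(M+8)/(λ·t0))·(u'(t0)² + λ²u(t0)²)·(t0/t)^m for every t ≥ t0. -/
open Real Set Filter MeasureTheory intervalIntegral

/-- A solution of the damped oscillator equation `u'' + b(t) u' + λ² u = 0` on `[t0, ∞)`: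
a `C¹` function `u` (with derivative `u'`) whose derivative is locally absolutely continuous
(i.e. it is the integral of a locally integrable function `w`) and which satisfies the
equation almost everywhere on `[t0, ∞)`. -/
def IsDampedSol (t0 : ℝ) (b : ℝ → ℝ) (lam : ℝ) (u u' : ℝ → ℝ) : Prop :=
  (∀ t ∈ Ici t0, HasDerivAt u (u' t) t) ∧
  ContinuousOn u' (Ici t0) ∧
  ∃ w : ℝ → ℝ,
    (∀ T ≥ t0, IntervalIntegrable w volume t0 T) ∧
    (∀ t ∈ Ici t0, u' t = u' t0 + ∫ s in t0..t, w s) ∧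
    (∀ᵐ t ∂(volume.restrict (Ici t0)), w t + b t * u' t + lam ^ 2 * u t = 0)


lemma ac_congr {f g : ℝ → ℝ} {a b : ℝ} (hf : AbsolutelyContinuousOnInterval f a b)
    (h : ∀ x ∈ uIcc a b, g x = f x) : AbsolutelyContinuousOnInterval g a b := by
  rw [absolutelyContinuousOnInterval_iff] at hf ⊢
  intro ε hε
  obtain ⟨δ, hδ, H⟩ := hf ε hε
  refine ⟨δ, hδ, fun E hE hs => ?_⟩
  have := H E hE hs
  refine lt_of_eq_of_lt (Finset.sum_congr rfl fun i hi => ?_) this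
  have h1 := hE.1 i hi
  rw [h _ h1.1, h _ h1.2]

lemma ac_antitone {f : ℝ → ℝ} {a b : ℝ} (hab : a ≤ b)
    (hf : AbsolutelyContinuousOnInterval f a b)
    (h : ∀ᵐ x, x ∈ Ioo a b → ∃ d ≤ 0, HasDerivAt f d x) : f b ≤ f a := by
  have h1 := hf.integral_deriv_eq_sub
  have h2 : ∫ x in a..b, deriv f x ≤ 0 := by
    rw [intervalIntegral.integral_of_le hab]
    apply MeasureTheory.setIntegral_nonpos_of_ae_restrict
    rw [Filter.EventuallyLE, ae_restrict_iff' measurableSet_Ioc]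
    have hb : ∀ᵐ x : ℝ, x ≠ b := by simp [ae_iff, measure_singleton]
    filter_upwards [h, hb] with x hx hxb hm
    obtain ⟨d, hd, hd'⟩ := hx ⟨hm.1, lt_of_le_of_ne hm.2 hxb⟩
    rw [hd'.deriv]; exact hd
  linarith

lemma sol_facts {t0 lam : ℝ} {b u u' : ℝ → ℝ} (hu : IsDampedSol t0 b lam u u')
    {T : ℝ} (hT : t0 ≤ T) :
    AbsolutelyContinuousOnInterval u t0 T ∧ AbsolutelyContinuousOnInterval u' t0 T ∧
    ∀ᵐ x, x ∈ Ioo t0 T → HasDerivAt u' (-(b x * u' x) - lam ^ 2 * u x) x := by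
  obtain ⟨h1, h2, w, hw, hw', hae⟩ := hu
  have hsub : Icc t0 T ⊆ Ici t0 := fun x hx => hx.1
  refine ⟨?_, ?_, ?_⟩
  · obtain ⟨C, hC⟩ := isCompact_Icc.exists_bound_of_continuousOn (h2.mono hsub)
    have hL : LipschitzOnWith (Real.toNNReal C) u (uIcc t0 T) := by
      rw [uIcc_of_le hT]
      refine (convex_Icc t0 T).lipschitzOnWith_of_nnnorm_hasDerivWithin_le
        (f' := u') (fun x hx => (h1 x (hsub hx)).hasDerivWithinAt) (fun x hx => ?_)
      rw [← NNReal.coe_le_coe]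
      exact (hC x hx).trans (Real.le_coe_toNNReal C)
    exact hL.absolutelyContinuousOnInterval
  · have hI := (hw T hT).absolutelyContinuousOnInterval_intervalIntegral (left_mem_uIcc)
    have hc : AbsolutelyContinuousOnInterval (fun _ : ℝ => u' t0) t0 T :=
      (contDiffOn_const (n := 1)).absolutelyContinuousOnInterval
    refine ac_congr (hc.add hI) fun x hx => ?_
    rw [uIcc_of_le hT] at hx
    exact hw' x hx.1
  · have hd := (hw T hT).ae_hasDerivAt_integral
    rw [ae_restrict_iff' measurableSet_Ici] at hae
    filter_upwards [hd, hae] with x hx hx2 hm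
    have hxm : x ∈ uIcc t0 T := by rw [uIcc_of_le hT]; exact ⟨hm.1.le, hm.2.le⟩
    have h3 := (hx hxm t0 left_mem_uIcc).const_add (u' t0)
    have h4 := hx2 hm.1.le
    have h5 : -(b x * u' x) - lam ^ 2 * u x = w x := by linarith
    rw [h5]
    refine h3.congr_of_eventuallyEq ?_
    filter_upwards [Ioi_mem_nhds hm.1] with y hy
    exact hw' y (mem_Ici.2 (le_of_lt (mem_Ioi.1 hy)))

lemma energy_anti {t0 lam : ℝ} {b u u' : ℝ → ℝ} (hu : IsDampedSol t0 b lam u u')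
    (hb : ∀ t ≥ t0, 0 ≤ b t) {T : ℝ} (hT : t0 ≤ T) :
    u' T ^ 2 + lam ^ 2 * u T ^ 2 ≤ u' t0 ^ 2 + lam ^ 2 * u t0 ^ 2 := by
  obtain ⟨h1, h2, h3⟩ := sol_facts hu hT
  have hac : AbsolutelyContinuousOnInterval (fun x => u' x ^ 2 + lam ^ 2 * u x ^ 2) t0 T :=
    ac_congr ((h2.mul h2).add ((h1.mul h1).const_mul (lam ^ 2))) fun x _ => by
      simp [pow_two]
  refine ac_antitone hT hac ?_
  filter_upwards [h3] with x hx hm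
  refine ⟨_, ?_, ((hx hm).pow 2).add (((hu.1 x hm.1.le).pow 2).const_mul (lam ^ 2))⟩
  have := mul_nonneg (hb x hm.1.le) (sq_nonneg (u' x))
  simp
  nlinarith

lemma uv_bound {lam p v : ℝ} (hlam : 0 < lam) :
    lam * |v * p| ≤ (p ^ 2 + lam ^ 2 * v ^ 2) / 2 := by
  rcases abs_cases (v * p) with ⟨h, _⟩ | ⟨h, _⟩ <;> rw [h]
  · nlinarith [sq_nonneg (p - lam * v)]
  · nlinarith [sq_nonneg (p + lam * v)]

lemma F_lower {lam p v m s : ℝ} (hlam : 0 < lam) (hm : 0 < m) (hs : 0 < s) :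
    |m * s⁻¹ * (v * p)| ≤ m / (2 * lam * s) * (p ^ 2 + lam ^ 2 * v ^ 2) := by
  have h := uv_bound (p := p) (v := v) hlam
  rw [abs_mul, abs_of_pos (by positivity : 0 < m * s⁻¹)]
  have : m / (2 * lam * s) * (p ^ 2 + lam ^ 2 * v ^ 2)
     = m * s⁻¹ * (((p ^ 2 + lam ^ 2 * v ^ 2) / 2) / lam) := by field_simp
  rw [this]
  gcongr
  rw [le_div_iff₀ hlam]; linarith

lemma key_ineq {lam p v m M s β : ℝ} (hlam : 0 < lam) (hm : 0 < m) (hs : 0 < s)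
    (hms : m ≤ lam * s) (hb1 : m ≤ β * s) (hb2 : β * s ≤ M) :
    (m / s - (m * (1 + M - m) / lam) / s ^ 2) *
        (p ^ 2 + lam ^ 2 * v ^ 2 + m * s⁻¹ * (v * p)) +
      (2 * p * (-(β * p) - lam ^ 2 * v) + lam ^ 2 * (2 * v * p) +
        (m * (-(s ^ 2)⁻¹) * (v * p) + m * s⁻¹ * (p * p + v * (-(β * p) - lam ^ 2 * v)))) ≤ 0 := by
  set E := p ^ 2 + lam ^ 2 * v ^ 2 with hE
  set F := E + m * s⁻¹ * (v * p) with hF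
  have hE0 : 0 ≤ E := by positivity
  have hq : m / (2 * lam * s) ≤ 1 / 2 := by
    rw [div_le_div_iff₀ (by positivity) (by norm_num)]; linarith
  have hFE : E / 2 ≤ F := by
    have h1 := (abs_le.1 (F_lower (p := p) (v := v) hlam hm hs)).1
    have h2 := mul_le_mul_of_nonneg_right hq hE0
    linarith
  have hMm : 0 < 1 + M - m := by linarith
  have hcoef : (m ^ 2 - m - m * (β * s)) * (v * p) ≤ m * (1 + M - m) * |v * p| := by
    have h1 : |m ^ 2 - m - m * (β * s)| ≤ m * (1 + M - m) := by
      rw [abs_le]; constructor <;> nlinarith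
    calc _ ≤ |(m ^ 2 - m - m * (β * s)) * (v * p)| := le_abs_self _
      _ = |m ^ 2 - m - m * (β * s)| * |v * p| := abs_mul _ _
      _ ≤ _ := by gcongr
  have huv : |v * p| ≤ E / 2 / lam := by
    rw [le_div_iff₀ hlam]; linarith [uv_bound (p := p) (v := v) hlam]
  have h5 : m * (1 + M - m) * |v * p| ≤ (m * (1 + M - m) / lam) * F := by
    calc _ ≤ m * (1 + M - m) * (E / 2 / lam) := by gcongr
      _ = (m * (1 + M - m) / lam) * (E / 2) := by ring
      _ ≤ _ := by gcongr
  have h6 : 0 ≤ 2 * (β * s - m) * s * p ^ 2 := by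
    have : 0 ≤ β * s - m := by linarith
    positivity
  have hid : (m / s - (m * (1 + M - m) / lam) / s ^ 2) * F +
      (2 * p * (-(β * p) - lam ^ 2 * v) + lam ^ 2 * (2 * v * p) +
        (m * (-(s ^ 2)⁻¹) * (v * p) + m * s⁻¹ * (p * p + v * (-(β * p) - lam ^ 2 * v))))
      = (-(2 * (β * s - m) * s * p ^ 2) + (m ^ 2 - m - m * (β * s)) * (v * p)
          - (m * (1 + M - m) / lam) * F) / s ^ 2 := by
    rw [hF, hE]; field_simp; ring
  rw [hid]
  apply div_nonpos_of_nonpos_of_nonneg _ (by positivity)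
  linarith

lemma late {t0 m M lam : ℝ} {b u u' : ℝ → ℝ} (ht0 : 0 < t0) (hm : 0 < m) (hmM : m ≤ M)
    (hb : ∀ t ≥ t0, m / t ≤ b t ∧ b t ≤ M / t) (hlam : 0 < lam)
    (hu : IsDampedSol t0 b lam u u') {t1 T : ℝ} (h01 : t0 ≤ t1) (h1T : t1 ≤ T)
    (hmt : m ≤ lam * t1) :
    T ^ m * (u' T ^ 2 + lam ^ 2 * u T ^ 2) ≤
      Real.exp (m * (M + 8) / (lam * t1)) * (t1 ^ m * (u' t1 ^ 2 + lam ^ 2 * u t1 ^ 2)) := by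
  have ht1 : 0 < t1 := ht0.trans_le h01
  have hT : 0 < T := ht1.trans_le h1T
  set K := m * (1 + M - m) / lam with hK
  have hK0 : 0 ≤ K := by
    have : 0 < 1 + M - m := by linarith
    positivity
  obtain ⟨hA, hB, hC⟩ := sol_facts hu (h01.trans h1T)
  have hsub : uIcc t1 T ⊆ uIcc t0 T := by
    rw [uIcc_of_le h1T, uIcc_of_le (h01.trans h1T)]; exact Icc_subset_Icc_left h01
  replace hA := hA.mono hsub
  replace hB := hB.mono hsub
  have hpos : ∀ x ∈ uIcc t1 T, 0 < x := by
    intro x hx; rw [uIcc_of_le h1T] at hx; exact ht1.trans_le hx.1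
  have hW : AbsolutelyContinuousOnInterval (fun s => s ^ m * Real.exp (K / s)) t1 T := by
    apply ContDiffOn.absolutelyContinuousOnInterval
    intro x hx
    have := hpos x hx
    apply ContDiffAt.contDiffWithinAt
    exact (Real.contDiffAt_rpow_const_of_ne this.ne').mul
      ((contDiffAt_const.div contDiffAt_id this.ne').exp)
  have hI : AbsolutelyContinuousOnInterval (fun s => m * s⁻¹) t1 T := by
    apply ContDiffOn.absolutelyContinuousOnInterval
    intro x hx
    have := hpos x hx
    apply ContDiffAt.contDiffWithinAt
    exact contDiffAt_const.mul (contDiffAt_inv ℝ this.ne')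
  have hΦ : AbsolutelyContinuousOnInterval (fun s => (s ^ m * Real.exp (K / s)) *
      (u' s ^ 2 + lam ^ 2 * u s ^ 2 + m * s⁻¹ * (u s * u' s))) t1 T :=
    ac_congr (hW.mul (((hB.mul hB).add ((hA.mul hA).const_mul (lam ^ 2))).add
      (hI.mul (hA.mul hB)))) fun x _ => by simp [pow_two]
  have hmono := ac_antitone h1T hΦ (by
    filter_upwards [hC] with x hx hmem
    have hx0 : 0 < x := ht1.trans hmem.1
    have hxt : t0 < x := h01.trans_lt hmem.1
    have d1 := hx ⟨hxt, hmem.2⟩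
    have d2 := hu.1 x hxt.le
    have dW : HasDerivAt (fun s => s ^ m * Real.exp (K / s))
        (x ^ m * Real.exp (K / x) * (m / x - K / x ^ 2)) x := by
      have e1 := Real.hasDerivAt_rpow_const (x := x) (p := m) (Or.inl hx0.ne')
      have e2 : HasDerivAt (fun s : ℝ => K / s) (-(K / x ^ 2)) x := by
        have := (hasDerivAt_inv hx0.ne').const_mul K
        simpa [div_eq_mul_inv] using this
      refine (e1.mul e2.exp).congr_deriv ?_
      rw [Real.rpow_sub_one hx0.ne']
      ring
    have dI : HasDerivAt (fun s : ℝ => m * s⁻¹) (m * (-(x ^ 2)⁻¹)) x :=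
      (hasDerivAt_inv hx0.ne').const_mul m
    have dF := ((d1.pow 2).add ((d2.pow 2).const_mul (lam ^ 2))).add (dI.mul (d2.mul d1))
    refine ⟨_, ?_, dW.mul dF⟩
    have hbx := hb x hxt.le
    have hk := key_ineq (p := u' x) (v := u x) (M := M) (β := b x) hlam hm hx0
      (hmt.trans (by gcongr; exact hmem.1.le))
      ((div_le_iff₀ hx0).1 hbx.1) ((le_div_iff₀ hx0).1 hbx.2)
    rw [← hK] at hk
    have hw0 : 0 ≤ x ^ m * Real.exp (K / x) := by positivity
    have := mul_nonpos_of_nonneg_of_nonpos hw0 hk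
    refine le_of_eq_of_le ?_ this
    simp
    ring)
  set ET := u' T ^ 2 + lam ^ 2 * u T ^ 2 with hET
  set E1 := u' t1 ^ 2 + lam ^ 2 * u t1 ^ 2 with hE1
  have hET0 : 0 ≤ ET := by positivity
  have hE10 : 0 ≤ E1 := by positivity
  set q := m / (2 * lam * t1) with hq
  have hq0 : 0 < q := by positivity
  have hq2 : q ≤ 1 / 2 := by
    rw [hq, div_le_div_iff₀ (by positivity) (by norm_num)]; linarith
  have hqT : m / (2 * lam * T) ≤ q := by rw [hq]; gcongr
  have l1 : (1 - q) * ET ≤ ET + m * T⁻¹ * (u T * u' T) := by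
    have a1 := (abs_le.1 (F_lower (p := u' T) (v := u T) hlam hm hT)).1
    have a2 := mul_le_mul_of_nonneg_right hqT hET0
    linarith
  have l2 : E1 + m * t1⁻¹ * (u t1 * u' t1) ≤ (1 + q) * E1 := by
    have a1 := (abs_le.1 (F_lower (p := u' t1) (v := u t1) hlam hm ht1)).2
    linarith
  have hexp : 1 ≤ Real.exp (K / T) := Real.one_le_exp (by positivity)
  have hTm : 0 < T ^ m := by positivity
  have c1 : T ^ m * ((1 - q) * ET) ≤ t1 ^ m * Real.exp (K / t1) * ((1 + q) * E1) := by
    calc _ ≤ T ^ m * Real.exp (K / T) * ((1 - q) * ET) := by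
          have : 0 ≤ (1 - q) * ET := mul_nonneg (by linarith) hET0
          apply mul_le_mul_of_nonneg_right _ this
          nlinarith
      _ ≤ T ^ m * Real.exp (K / T) * (ET + m * T⁻¹ * (u T * u' T)) := by gcongr
      _ ≤ t1 ^ m * Real.exp (K / t1) * (E1 + m * t1⁻¹ * (u t1 * u' t1)) := hmono
      _ ≤ _ := by gcongr
  have e1 : 1 + q ≤ Real.exp q := by linarith [Real.add_one_le_exp q]
  have e2 : 1 ≤ Real.exp (2 * q) * (1 - q) := by
    have := Real.add_one_le_exp (2 * q)
    nlinarith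
  calc T ^ m * ET ≤ T ^ m * ET * (Real.exp (2 * q) * (1 - q)) :=
        le_mul_of_one_le_right (by positivity) e2
    _ = Real.exp (2 * q) * (T ^ m * ((1 - q) * ET)) := by ring
    _ ≤ Real.exp (2 * q) * (t1 ^ m * Real.exp (K / t1) * ((1 + q) * E1)) := by gcongr
    _ ≤ Real.exp (2 * q) * (t1 ^ m * Real.exp (K / t1) * (Real.exp q * E1)) := by gcongr
    _ = Real.exp (2 * q + K / t1 + q) * (t1 ^ m * E1) := by
        rw [Real.exp_add, Real.exp_add]; ring
    _ ≤ _ := by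
        gcongr
        have : 2 * q + K / t1 + q = m * (1 + M - m + 3 / 2) / (lam * t1) := by
          rw [hq, hK]; field_simp; ring
        have h9 : 1 + M - m + 3 / 2 ≤ M + 8 := by linarith
        rw [this]
        exact div_le_div_of_nonneg_right (mul_le_mul_of_nonneg_left h9 hm.le) (by positivity)

theorem hyperbolic_regime_general
    (t0 m M : ℝ) (ht0 : 0 < t0) (hm : 0 < m) (hmM : m ≤ M)
    (b : ℝ → ℝ) (hbmeas : Measurable b)
    (hb : ∀ t ≥ t0, m / t ≤ b t ∧ b t ≤ M / t)
    (lam : ℝ) (hlam : 0 < lam)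
    (u u' : ℝ → ℝ) (hu : IsDampedSol t0 b lam u u') :
    ∀ t ≥ t0,
      u' t ^ 2 + lam ^ 2 * u t ^ 2 ≤
        Real.exp (m * (M + 8) / (lam * t0)) * (u' t0 ^ 2 + lam ^ 2 * u t0 ^ 2) *
          (t0 / t) ^ m := by
  intro t ht
  have htp : 0 < t := ht0.trans_le ht
  have hM : 0 < M := hm.trans_le hmM
  have hb0 : ∀ s ≥ t0, 0 ≤ b s := fun s hs =>
    (div_nonneg hm.le (ht0.le.trans hs)).trans (hb s hs).1
  have hE0 : 0 ≤ u' t0 ^ 2 + lam ^ 2 * u t0 ^ 2 := by positivity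
  suffices H : t ^ m * (u' t ^ 2 + lam ^ 2 * u t ^ 2) ≤
      Real.exp (m * (M + 8) / (lam * t0)) * (t0 ^ m * (u' t0 ^ 2 + lam ^ 2 * u t0 ^ 2)) by
    rw [Real.div_rpow ht0.le htp.le, ← mul_div_assoc, le_div_iff₀ (by positivity)]
    linarith
  -- elementary growth bound
  have hgrow : ∀ s : ℝ, t0 ≤ s → s ^ m ≤ Real.exp (m * (s / t0 - 1)) * t0 ^ m := by
    intro s hs
    have hs0 : 0 < s := ht0.trans_le hs
    have h1 : s / t0 ≤ Real.exp (s / t0 - 1) := by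
      linarith [Real.add_one_le_exp (s / t0 - 1)]
    have h2 := Real.rpow_le_rpow (by positivity) h1 hm.le
    rw [Real.div_rpow hs0.le ht0.le, ← Real.exp_mul, div_le_iff₀ (by positivity),
      mul_comm (s / t0 - 1)] at h2
    exact h2
  rcases le_or_gt m (lam * t0) with hc | hc
  · exact late ht0 hm hmM hb hlam hu le_rfl ht hc
  · rcases le_or_gt t (m / lam) with hl | hl
    · have h1 := energy_anti hu hb0 ht
      have h2 : m * (t / t0 - 1) ≤ m * (M + 8) / (lam * t0) := by
        have : t / t0 ≤ (M + 8) / (lam * t0) := by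
          rw [div_le_div_iff₀ ht0 (by positivity)]
          rw [le_div_iff₀ hlam] at hl
          nlinarith
        rw [mul_div_assoc]
        gcongr
        linarith
      calc _ ≤ (Real.exp (m * (t / t0 - 1)) * t0 ^ m) * (u' t0 ^ 2 + lam ^ 2 * u t0 ^ 2) := by
            gcongr; exact hgrow t ht
        _ ≤ (Real.exp (m * (M + 8) / (lam * t0)) * t0 ^ m) *
            (u' t0 ^ 2 + lam ^ 2 * u t0 ^ 2) := by gcongr
        _ = _ := by ring
    · have h01 : t0 ≤ m / lam := by rw [le_div_iff₀ hlam]; linarith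
      have hmt : lam * (m / lam) = m := by field_simp
      have h3 := late ht0 hm hmM hb hlam hu h01 hl.le hmt.ge
      rw [hmt] at h3
      have h1 := energy_anti hu hb0 h01
      refine h3.trans ?_
      calc _ ≤ Real.exp (m * (M + 8) / m) * ((Real.exp (m * (m / lam / t0 - 1)) * t0 ^ m) *
              (u' t0 ^ 2 + lam ^ 2 * u t0 ^ 2)) := by
            gcongr; exact hgrow _ h01
        _ = Real.exp (m * (M + 8) / m + m * (m / lam / t0 - 1)) *
              (t0 ^ m * (u' t0 ^ 2 + lam ^ 2 * u t0 ^ 2)) := by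
            rw [Real.exp_add]; ring
        _ ≤ _ := by
            gcongr
            have hx : 1 ≤ m / (lam * t0) := by
              rw [le_div_iff₀ (by positivity)]; linarith
            have e1 : m * (M + 8) / m = M + 8 := by field_simp
            have e2 : m / lam / t0 = m / (lam * t0) := by field_simp
            have e3 : m * (M + 8) / (lam * t0) = m / (lam * t0) * (M + 8) := by ring
            rw [e1, e2, e3]
            nlinarith
end

section
/- Let t0 > 0 and let b(t) := (a + r·sin(t^α))/t for t ≥ t0, where a > 0, 0 ≤ r ≤ a and α > 1. Set Γ4 := exp( (2a(a+r+8) + 5r(a+r+4))/(2λ·t0) + 3r/(α·t0^α) + r·log 3/(α−1) ). Then for every λ > 0, every solution u of the damped oscillator equation u'' + b(t)u' + λ²u = 0 satisfies u'(t)² + λ²u(t)² ≤ Γ4·(u'(t0)² + λ²u(t0)²)·(t0/t)^a for every t ≥ t0. -/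
open Real Set Filter MeasureTheory intervalIntegral

lemma gen_osc (p q t0 K B : ℝ) (ht0 : 0 < t0) (hp : t0 ≤ p) (hpq : p ≤ q) (hK : 0 ≤ K)
    (hB : 0 ≤ B) (Y Q k k' j e : ℝ → ℝ)
    (hY : ContinuousOn Y (Icc p q)) (hQ : ContinuousOn Q (Icc p q)) (hk : ContinuousOn k (Icc p q))
    (hkd : ∀ s ∈ Ioo p q, HasDerivAt k (k' s) s) (hk0 : ∀ s ∈ Ioo p q, k' s ≤ 0)
    (hYd : ∀ s ∈ Ioo p q, HasDerivAt Y (-(j s + e s) * Q s) s)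
    (hkj : ∀ s ∈ Ioo p q, k s * j s = 1)
    (he : ∀ s ∈ Ioo p q, |e s| ≤ B / s)
    (hY1 : ∀ s ∈ Icc p q, |Y s| ≤ 1) (hQ1 : ∀ s ∈ Icc p q, |Q s| ≤ 1)
    (hkK : ∀ s ∈ Icc p q, |k s| ≤ K) :
    ∫ s in p..q, -Q s / s ≤ K * (5 + B) / t0 := by
  have hpos : ∀ s ∈ Icc p q, 0 < s := fun s hs => by linarith [hs.1]
  have hne : ∀ s ∈ Icc p q, s ≠ 0 := fun s hs => (hpos s hs).ne'
  have key := integral_le_sub_of_hasDeriv_right_of_le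
    (g := fun s => k s * Y s / s - k s / t0 - K * (1 + B) / s)
    (g' := fun s => ((k' s * Y s + k s * (-(j s + e s) * Q s)) * s - k s * Y s * 1) / s ^ 2
      - k' s / t0 - (0 * s - K * (1 + B) * 1) / s ^ 2)
    (φ := fun s => -Q s / s) hpq ?_ ?_ ?_ ?_
  · refine key.trans ?_
    have hp' := hpos p ⟨le_rfl, hpq⟩
    have hq' := hpos q ⟨hpq, le_rfl⟩
    have kY : ∀ s ∈ Icc p q, |k s * Y s / s| ≤ K / t0 := by
      intro s hs
      rw [abs_div, abs_mul, abs_of_pos (hpos s hs)]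
      have := mul_le_mul (hkK s hs) (hY1 s hs) (abs_nonneg _) hK
      have h2 : t0 ≤ s := hp.trans hs.1
      exact div_le_div₀ hK (by linarith) ht0 h2
    have h1 := abs_le.1 (kY p ⟨le_rfl, hpq⟩)
    have h2 := abs_le.1 (kY q ⟨hpq, le_rfl⟩)
    have h3 := div_le_div_of_nonneg_right (abs_le.1 (hkK p ⟨le_rfl, hpq⟩)).2 ht0.le
    have h4 := div_le_div_of_nonneg_right (abs_le.1 (hkK q ⟨hpq, le_rfl⟩)).1 ht0.le
    have h5 : K * (1 + B) / p ≤ K * (1 + B) / t0 := 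
      div_le_div_of_nonneg_left (by positivity) ht0 hp
    have h6 : 0 ≤ K * (1 + B) / q := by positivity
    have h7 : K * (5 + B) / t0 = K * (1 + B) / t0 + 4 * (K / t0) := by ring
    have h8 : -K / t0 = - (K / t0) := by ring
    linarith [h1.1, h1.2, h2.1, h2.2]
  · refine ((hk.mul hY).div continuousOn_id hne |>.sub (hk.div_const _)).sub
      (continuousOn_const.div continuousOn_id hne)
  · intro s hs
    have hs' := Ioo_subset_Icc_self hs
    have A := (((hkd s hs).mul (hYd s hs)).div (hasDerivAt_id s) (hne s hs')).sub
      ((hkd s hs).div_const t0)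
    have A2 := A.sub ((hasDerivAt_const s (K * (1 + B))).div (hasDerivAt_id s) (hne s hs'))
    exact A2.hasDerivWithinAt
  · exact (hQ.neg.div continuousOn_id hne).integrableOn_Icc
  · intro s hs
    have hs' := Ioo_subset_Icc_self hs
    have sp := hpos s hs'
    have e1 := hkj s hs
    have expand : ((k' s * Y s + k s * (-(j s + e s) * Q s)) * s - k s * Y s * 1) / s ^ 2
      - k' s / t0 - (0 * s - K * (1 + B) * 1) / s ^ 2 
      = -Q s / s + (k' s * Y s / s - k' s / t0) + (K * B / s^2 - k s * e s * Q s / s)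
        + (K - k s * Y s) / s^2 := by
      have : k s * (-(j s + e s) * Q s) = - Q s - k s * e s * Q s := by
        linear_combination (-Q s) * e1
      rw [this]; field_simp; ring
    rw [expand]
    have i1 : 0 ≤ k' s * Y s / s - k' s / t0 := by
      have : (-k' s) * Y s / s ≤ (-k' s) / t0 := by
        apply div_le_div₀ (by linarith [hk0 s hs]) _ ht0 (hp.trans hs'.1)
        nlinarith [hk0 s hs, (abs_le.1 (hY1 s hs')).2]
      have e2 : (-k' s) * Y s / s = - (k' s * Y s / s) := by ring
      have e3 : (-k' s) / t0 = - (k' s / t0) := by ring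
      linarith
    have i2 : 0 ≤ K * B / s^2 - k s * e s * Q s / s := by
      have : k s * e s * Q s ≤ K * (B / s) * 1 := by
        refine (le_abs_self _).trans ?_
        rw [abs_mul, abs_mul]
        have := he s hs
        have := hkK s hs'
        have := hQ1 s hs'
        gcongr
      have h := div_le_div_of_nonneg_right this sp.le
      have e2 : K * (B / s) * 1 / s = K * B / s^2 := by field_simp
      linarith
    have i3 : 0 ≤ (K - k s * Y s) / s^2 := by
      apply div_nonneg _ (by positivity)
      have : |k s * Y s| ≤ K * 1 := by
        rw [abs_mul]
        exact mul_le_mul (hkK s hs') (hY1 s hs') (abs_nonneg _) hK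
      linarith [le_abs_self (k s * Y s)]
    linarith

lemma sin_osc (t0 T α : ℝ) (ht0 : 0 < t0) (hT : t0 ≤ T) (hα : 1 < α) :
    ∫ s in t0..T, -Real.sin (s ^ α) / s ≤ 2 / (α * t0 ^ α) := by
  have hpos : ∀ s ∈ Icc t0 T, 0 < s := fun s hs => by linarith [hs.1]
  have hne : ∀ s ∈ Icc t0 T, s ≠ 0 := fun s hs => (hpos s hs).ne'
  have ha : 0 < α := by linarith
  have hcont : ContinuousOn (fun s : ℝ => s ^ α) (Icc t0 T) :=
    continuousOn_id.rpow_const (fun s hs => Or.inl (hne s hs))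
  have hne2 : ∀ s ∈ Icc t0 T, α * s ^ α ≠ 0 := fun s hs => by
    have := Real.rpow_pos_of_pos (hpos s hs) α
    positivity
  have key := integral_le_sub_of_hasDeriv_right_of_le
    (g := fun s => (Real.cos (s ^ α) - 1) / (α * s ^ α))
    (g' := fun s => (-Real.sin (s ^ α) * (α * s ^ (α - 1)) * (α * s ^ α) -
        (Real.cos (s ^ α) - 1) * (α * (α * s ^ (α - 1)))) / (α * s ^ α) ^ 2)
    (φ := fun s => -Real.sin (s ^ α) / s) hT ?_ ?_ ?_ ?_
  · refine key.trans ?_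
    have p0 := Real.rpow_pos_of_pos ht0 α
    have p1 := Real.rpow_pos_of_pos (hpos T ⟨hT, le_rfl⟩) α
    have h1 : (Real.cos (T ^ α) - 1) / (α * T ^ α) ≤ 0 :=
      div_nonpos_of_nonpos_of_nonneg (by linarith [Real.cos_le_one (T ^ α)]) (by positivity)
    have h2 : -2 / (α * t0 ^ α) ≤ (Real.cos (t0 ^ α) - 1) / (α * t0 ^ α) :=
      div_le_div_of_nonneg_right (by linarith [Real.neg_one_le_cos (t0 ^ α)]) (by positivity)
    have h3 : -2 / (α * t0 ^ α) = -(2 / (α * t0 ^ α)) := by ring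
    linarith
  · exact ((Real.continuous_cos.comp_continuousOn hcont).sub continuousOn_const).div
      (continuousOn_const.mul hcont) hne2
  · intro s hs
    have hs' := Ioo_subset_Icc_self hs
    have A := Real.hasDerivAt_rpow_const (x := s) (p := α) (Or.inl (hne s hs'))
    exact ((A.cos.sub_const 1).div (A.const_mul α) (hne2 s hs')).hasDerivWithinAt
  · exact ((Real.continuous_sin.comp_continuousOn hcont).neg.div continuousOn_id hne).integrableOn_Icc
  · intro s hs
    have hs' := Ioo_subset_Icc_self hs
    have sp := hpos s hs'
    have p1 := Real.rpow_pos_of_pos sp α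
    have e : s ^ (α - 1) = s ^ α / s := by rw [Real.rpow_sub_one sp.ne']
    simp only [e]
    have : (-Real.sin (s ^ α) * (α * (s ^ α / s)) * (α * s ^ α) -
        (Real.cos (s ^ α) - 1) * (α * (α * (s ^ α / s)))) / (α * s ^ α) ^ 2
        = -Real.sin (s ^ α) / s + (1 - Real.cos (s ^ α)) / (s * s ^ α) := by
      field_simp; ring
    rw [this]
    have : 0 ≤ (1 - Real.cos (s ^ α)) / (s * s ^ α) := 
      div_nonneg (by linarith [Real.cos_le_one (s ^ α)]) (by positivity)
    linarith

/-- nonresonant phase `s ^ α + 2 θ` or `s ^ α - 2 θ`. -/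
lemma phase_osc (p q t0 K B α m : ℝ) (ht0 : 0 < t0) (hp : t0 ≤ p) (hpq : p ≤ q) (hK : 0 ≤ K)
    (hB : 0 ≤ B) (hα : 1 < α) (C S b : ℝ → ℝ) (ε : ℝ) (hε : ε = 1 ∨ ε = -1)
    (hC : ContinuousOn C (Icc p q)) (hS : ContinuousOn S (Icc p q))
    (hCd : ∀ s ∈ Ioo p q, HasDerivAt C (-(m + b s * S s) * S s) s)
    (hSd : ∀ s ∈ Ioo p q, HasDerivAt S ((m + b s * S s) * C s) s)
    (hCS : ∀ s ∈ Icc p q, C s ^ 2 + S s ^ 2 = 1)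
    (hb : ∀ s ∈ Icc p q, |b s| ≤ B / s)
    (hne0 : ∀ s ∈ Icc p q, α * s ^ (α - 1) + ε * m ≠ 0)
    (hkK : ∀ s ∈ Icc p q, |(α * s ^ (α - 1) + ε * m)⁻¹| ≤ K) :
    ∫ s in p..q, -(Real.sin (s ^ α) * C s + ε * Real.cos (s ^ α) * S s) / s
      ≤ K * (5 + B) / t0 := by
  have hpos : ∀ s ∈ Icc p q, 0 < s := fun s hs => by linarith [hs.1]
  have hne : ∀ s ∈ Icc p q, s ≠ 0 := fun s hs => (hpos s hs).ne'
  have hcont : ContinuousOn (fun s : ℝ => s ^ α) (Icc p q) :=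
    continuousOn_id.rpow_const (fun s hs => Or.inl (hne s hs))
  have hcont' : ContinuousOn (fun s : ℝ => s ^ (α - 1)) (Icc p q) :=
    continuousOn_id.rpow_const (fun s hs => Or.inl (hne s hs))
  have hsin := Real.continuous_sin.comp_continuousOn hcont
  have hcos := Real.continuous_cos.comp_continuousOn hcont
  have hε2 : ε ^ 2 = 1 := by rcases hε with h | h <;> rw [h] <;> norm_num
  have hε1 : |ε| = 1 := by rcases hε with h | h <;> rw [h] <;> norm_num
  refine gen_osc p q t0 K B ht0 hp hpq hK hB
    (fun s => Real.cos (s ^ α) * C s - ε * Real.sin (s ^ α) * S s)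
    (fun s => Real.sin (s ^ α) * C s + ε * Real.cos (s ^ α) * S s)
    (fun s => (α * s ^ (α - 1) + ε * m)⁻¹)
    (fun s => -(α * ((α - 1) * s ^ (α - 1 - 1))) / (α * s ^ (α - 1) + ε * m) ^ 2)
    (fun s => α * s ^ (α - 1) + ε * m) (fun s => ε * (b s * S s))
    ?_ ?_ ?_ ?_ ?_ ?_ ?_ ?_ ?_ ?_ hkK
  · exact (hcos.mul hC).sub ((continuousOn_const.mul hsin).mul hS)
  · exact (hsin.mul hC).add ((continuousOn_const.mul hcos).mul hS)
  · exact ((continuousOn_const.mul hcont').add continuousOn_const).inv₀ hne0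
  · intro s hs
    have hs' := Ioo_subset_Icc_self hs
    have A := Real.hasDerivAt_rpow_const (x := s) (p := α - 1) (Or.inl (hne s hs'))
    exact ((A.const_mul α).add_const (ε * m)).inv (hne0 s hs')
  · intro s hs
    have sp := hpos s (Ioo_subset_Icc_self hs)
    have := Real.rpow_pos_of_pos sp (α - 1 - 1)
    have h2 : 0 < α - 1 := by linarith
    have h3 : 0 < α := by linarith
    apply div_nonpos_of_nonpos_of_nonneg _ (by positivity)
    have : 0 < (α * ((α - 1) * s ^ (α - 1 - 1))) := by positivity
    linarith
  · intro s hs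
    have hs' := Ioo_subset_Icc_self hs
    have A := Real.hasDerivAt_rpow_const (x := s) (p := α) (Or.inl (hne s hs'))
    have := (A.cos.mul (hCd s hs)).sub ((A.sin.const_mul ε).mul (hSd s hs))
    refine this.congr_deriv ?_
    linear_combination (-(-Real.cos (s ^ α) * S s * (m + b s * S s))) * hε2
  · intro s hs
    exact inv_mul_cancel₀ (hne0 s (Ioo_subset_Icc_self hs))
  · intro s hs
    have hs' := Ioo_subset_Icc_self hs
    have h1 := hCS s hs'
    have h2 : |S s| ≤ 1 := by
      rw [← sq_le_one_iff_abs_le_one]; nlinarith [sq_nonneg (C s)]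
    rw [abs_mul, hε1, one_mul, abs_mul]
    have := hb s hs'
    have : |b s| * |S s| ≤ |b s| * 1 := by gcongr
    linarith
  · intro s hs
    rw [← sq_le_one_iff_abs_le_one]
    have h1 := hCS s hs
    have h2 := Real.sin_sq_add_cos_sq (s ^ α)
    have : (Real.cos (s ^ α) * C s - ε * Real.sin (s ^ α) * S s) ^ 2
      = 1 - (Real.sin (s ^ α) * C s + ε * Real.cos (s ^ α) * S s) ^ 2 := by
      linear_combination (C s ^ 2 + ε ^ 2 * S s ^ 2) * h2 + S s ^ 2 * hε2 + h1
    rw [this]; nlinarith [sq_nonneg (Real.sin (s ^ α) * C s + ε * Real.cos (s ^ α) * S s)]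
  · intro s hs
    rw [← sq_le_one_iff_abs_le_one]
    have h1 := hCS s hs
    have h2 := Real.sin_sq_add_cos_sq (s ^ α)
    have : (Real.sin (s ^ α) * C s + ε * Real.cos (s ^ α) * S s) ^ 2
      = 1 - (Real.cos (s ^ α) * C s - ε * Real.sin (s ^ α) * S s) ^ 2 := by
      linear_combination (C s ^ 2 + ε ^ 2 * S s ^ 2) * h2 + S s ^ 2 * hε2 + h1
    rw [this]; nlinarith [sq_nonneg (Real.cos (s ^ α) * C s - ε * Real.sin (s ^ α) * S s)]

lemma C_osc (p q t0 B m : ℝ) (ht0 : 0 < t0) (hp : t0 ≤ p) (hpq : p ≤ q) (hm : 0 < m)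
    (hB : 0 ≤ B) (C S b : ℝ → ℝ)
    (hC : ContinuousOn C (Icc p q)) (hS : ContinuousOn S (Icc p q))
    (hSd : ∀ s ∈ Ioo p q, HasDerivAt S ((m + b s * S s) * C s) s)
    (hCS : ∀ s ∈ Icc p q, C s ^ 2 + S s ^ 2 = 1)
    (hb : ∀ s ∈ Icc p q, |b s| ≤ B / s) :
    ∫ s in p..q, -C s / s ≤ m⁻¹ * (5 + B) / t0 := by
  refine gen_osc p q t0 m⁻¹ B ht0 hp hpq (by positivity) hB
    (fun s => - S s) C (fun s => m⁻¹) (fun s => 0) (fun s => m) (fun s => b s * S s)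
    hS.neg hC continuousOn_const ?_ ?_ ?_ ?_ ?_ ?_ ?_ ?_
  · intro s hs; exact hasDerivAt_const _ _
  · intro s hs; exact le_rfl
  · intro s hs; exact (hSd s hs).neg.congr_deriv (by ring)
  · intro s hs; exact inv_mul_cancel₀ hm.ne'
  · intro s hs
    have hs' := Ioo_subset_Icc_self hs
    have h1 := hCS s hs'
    have h2 : |S s| ≤ 1 := by
      rw [← sq_le_one_iff_abs_le_one]; nlinarith [sq_nonneg (C s)]
    rw [abs_mul]
    have := hb s hs'
    have : |b s| * |S s| ≤ |b s| * 1 := by gcongr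
    linarith
  · intro s hs
    rw [abs_neg, ← sq_le_one_iff_abs_le_one]; nlinarith [sq_nonneg (C s), hCS s hs]
  · intro s hs
    rw [← sq_le_one_iff_abs_le_one]; nlinarith [sq_nonneg (S s), hCS s hs]
  · intro s hs
    rw [abs_of_pos (by positivity)]

lemma Q_osc (t0 T B α m : ℝ) (ht0 : 0 < t0) (hT : t0 ≤ T) (hm : 0 < m)
    (hB : 0 ≤ B) (hα : 1 < α) (C S b : ℝ → ℝ)
    (hC : ContinuousOn C (Icc t0 T)) (hS : ContinuousOn S (Icc t0 T))
    (hCd : ∀ s ∈ Ioo t0 T, HasDerivAt C (-(m + b s * S s) * S s) s)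
    (hSd : ∀ s ∈ Ioo t0 T, HasDerivAt S ((m + b s * S s) * C s) s)
    (hCS : ∀ s ∈ Icc t0 T, C s ^ 2 + S s ^ 2 = 1)
    (hb : ∀ s ∈ Icc t0 T, |b s| ≤ B / s) :
    ∫ s in t0..T, -(Real.sin (s ^ α) * C s + (-1) * Real.cos (s ^ α) * S s) / s
      ≤ 2 / m * (5 + B) / t0 + 2 * Real.log 3 / (α - 1) := by
  have hpos : ∀ s ∈ Icc t0 T, 0 < s := fun s hs => by linarith [hs.1]
  have hne : ∀ s ∈ Icc t0 T, s ≠ 0 := fun s hs => (hpos s hs).ne'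
  have hα0 : 0 < α := by linarith
  have hα1 : 0 < α - 1 := by linarith
  have hcont : ContinuousOn (fun s : ℝ => s ^ α) (Icc t0 T) :=
    continuousOn_id.rpow_const (fun s hs => Or.inl (hne s hs))
  have hsin := Real.continuous_sin.comp_continuousOn hcont
  have hcos := Real.continuous_cos.comp_continuousOn hcont
  set f : ℝ → ℝ := fun s => -(Real.sin (s ^ α) * C s + (-1) * Real.cos (s ^ α) * S s) / s with hf
  have hfc : ContinuousOn f (Icc t0 T) :=
    ((hsin.mul hC).add ((continuousOn_const.mul hcos).mul hS)).neg.div continuousOn_id hne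
  set t1 : ℝ := (m / (3 * α)) ^ (α - 1)⁻¹ with ht1
  set R : ℝ := 9 ^ (α - 1)⁻¹ with hR
  have hx : 0 < m / (3 * α) := by positivity
  have ht1p : 0 < t1 := Real.rpow_pos_of_pos hx _
  have hR1 : 1 ≤ R := Real.one_le_rpow (by norm_num) (by positivity)
  have ht1e : t1 ^ (α - 1) = m / (3 * α) := Real.rpow_inv_rpow hx.le hα1.ne'
  have hRe : R ^ (α - 1) = 9 := Real.rpow_inv_rpow (by norm_num) hα1.ne'
  have low : ∀ s, 0 < s → s ≤ t1 → α * s ^ (α - 1) ≤ m / 3 := by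
    intro s hs h
    have := Real.rpow_le_rpow hs.le h hα1.le
    rw [ht1e] at this
    calc α * s ^ (α - 1) ≤ α * (m / (3 * α)) := by gcongr
      _ = m / 3 := by field_simp
  have high : ∀ s, R * t1 ≤ s → 3 * m ≤ α * s ^ (α - 1) := by
    intro s h
    have := Real.rpow_le_rpow (by positivity) h hα1.le
    rw [Real.mul_rpow (by positivity) ht1p.le, ht1e, hRe] at this
    calc 3 * m = α * (9 * (m / (3 * α))) := by field_simp; norm_num
      _ ≤ _ := by gcongr
  have hlogR : Real.log R = 2 * Real.log 3 / (α - 1) := by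
    rw [hR, Real.log_rpow (by norm_num), show (9:ℝ) = 3 ^ 2 by norm_num, Real.log_pow]
    push_cast; ring
  set p1 := max t0 (min T t1) with hp1
  set p2 := max t0 (min T (R * t1)) with hp2
  have ht12 : t1 ≤ R * t1 := by nlinarith
  have h01 : t0 ≤ p1 := le_max_left _ _
  have h12 : p1 ≤ p2 := max_le_max le_rfl (min_le_min le_rfl ht12)
  have h2T : p2 ≤ T := max_le hT (min_le_left _ _)
  have fint : ∀ x y, t0 ≤ x → x ≤ y → y ≤ T → IntervalIntegrable f volume x y := by
    intro x y h1 h2 h3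
    apply ContinuousOn.intervalIntegrable
    rw [uIcc_of_le h2]
    exact hfc.mono (Icc_subset_Icc h1 h3)
  have i01 := fint t0 p1 le_rfl h01 (h12.trans h2T)
  have i12 := fint p1 p2 h01 h12 h2T
  have i2T := fint p2 T (h01.trans h12) h2T le_rfl
  rw [← integral_add_adjacent_intervals (i01.trans i12) i2T,
    ← integral_add_adjacent_intervals i01 i12]
  -- low part
  have A1 : ∫ s in t0..p1, f s ≤ (3 / (2 * m)) * (5 + B) / t0 := by
    rcases h01.eq_or_lt with h | h
    · rw [← h]; simp only [integral_same]; positivity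
    · have hp1t : p1 ≤ t1 := by
        rcases max_cases t0 (min T t1) with ⟨h1, h2⟩ | ⟨h1, h2⟩
        · rw [hp1, h1] at h; exact absurd h (lt_irrefl _)
        · rw [hp1, h1]; exact min_le_right _ _
      have hsub : Icc t0 p1 ⊆ Icc t0 T := Icc_subset_Icc le_rfl (h12.trans h2T)
      have hsub' : Ioo t0 p1 ⊆ Ioo t0 T := Ioo_subset_Ioo le_rfl (h12.trans h2T)
      have hd : ∀ s ∈ Icc t0 p1, α * s ^ (α - 1) + (-1) * m ≤ - (2 * m / 3) := by
        intro s hs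
        have := low s (hpos s (hsub hs)) (hs.2.trans hp1t)
        linarith
      refine phase_osc t0 p1 t0 _ B α m ht0 le_rfl h01 (by positivity) hB hα C S b (-1) (Or.inr rfl)
        (hC.mono hsub) (hS.mono hsub) (fun s hs => hCd s (hsub' hs)) (fun s hs => hSd s (hsub' hs))
        (fun s hs => hCS s (hsub hs)) (fun s hs => hb s (hsub hs)) ?_ ?_
      · intro s hs
        have := hd s hs
        have : α * s ^ (α - 1) + (-1) * m < 0 := by linarith
        exact this.ne
      · intro s hs
        have := hd s hs
        rw [abs_inv, abs_of_neg (by linarith)]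
        rw [inv_le_comm₀ (by linarith) (by positivity)]
        have : (3 / (2 * m))⁻¹ = 2 * m / 3 := by field_simp
        linarith
  have A3 : ∫ s in p2..T, f s ≤ (1 / (2 * m)) * (5 + B) / t0 := by
    rcases h2T.eq_or_lt with h | h
    · rw [h]; simp only [integral_same]; positivity
    · have hp2t : R * t1 ≤ p2 := by
        have h3 : min T (R * t1) ≤ p2 := le_max_right _ _
        rcases min_cases T (R * t1) with ⟨h1, h2⟩ | ⟨h1, h2⟩
        · rw [h1] at h3; linarith
        · rw [h1] at h3; exact h3
      have hsub : Icc p2 T ⊆ Icc t0 T := Icc_subset_Icc (h01.trans h12) le_rfl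
      have hsub' : Ioo p2 T ⊆ Ioo t0 T := Ioo_subset_Ioo (h01.trans h12) le_rfl
      have hd : ∀ s ∈ Icc p2 T, 2 * m ≤ α * s ^ (α - 1) + (-1) * m := by
        intro s hs
        have := high s (hp2t.trans hs.1)
        linarith
      refine phase_osc p2 T t0 _ B α m ht0 (h01.trans h12) h2T (by positivity) hB hα C S b (-1)
        (Or.inr rfl)
        (hC.mono hsub) (hS.mono hsub) (fun s hs => hCd s (hsub' hs)) (fun s hs => hSd s (hsub' hs))
        (fun s hs => hCS s (hsub hs)) (fun s hs => hb s (hsub hs)) ?_ ?_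
      · intro s hs
        have := hd s hs
        have : 0 < α * s ^ (α - 1) + (-1) * m := by linarith
        exact this.ne'
      · intro s hs
        have := hd s hs
        rw [abs_inv, abs_of_pos (by linarith), one_div]
        exact inv_anti₀ (by positivity) this
  have A2 : ∫ s in p1..p2, f s ≤ 2 * Real.log 3 / (α - 1) := by
    have p1p : 0 < p1 := by linarith
    have p2p : 0 < p2 := by linarith
    have hp21 : p2 ≤ R * p1 := by
      apply max_le
      · nlinarith
      · have h3 : min T t1 ≤ p1 := le_max_right _ _
        have hT0 : 0 < T := by linarith
        rcases min_cases T t1 with ⟨h1, h2⟩ | ⟨h1, h2⟩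
        · rw [h1] at h3
          refine (min_le_left _ _).trans ?_
          nlinarith
        · rw [h1] at h3
          refine (min_le_right _ _).trans ?_
          gcongr
    have hmono : ∫ s in p1..p2, f s ≤ ∫ s in p1..p2, s⁻¹ := by
      apply integral_mono_on h12 i12
      · apply ContinuousOn.intervalIntegrable
        rw [uIcc_of_le h12]
        exact continuousOn_id.inv₀ (fun s hs => (p1p.trans_le hs.1).ne')
      · intro s hs
        have hs' : s ∈ Icc t0 T := ⟨h01.trans hs.1, hs.2.trans h2T⟩
        have sp := hpos s hs'
        rw [hf]
        simp only
        rw [div_eq_mul_inv]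
        have h1 := hCS s hs'
        have h2 := Real.sin_sq_add_cos_sq (s ^ α)
        have : |(Real.sin (s ^ α) * C s + (-1) * Real.cos (s ^ α) * S s)| ≤ 1 := by
          rw [← sq_le_one_iff_abs_le_one]
          have : (Real.sin (s ^ α) * C s + (-1) * Real.cos (s ^ α) * S s) ^ 2
            = 1 - (Real.cos (s ^ α) * C s + Real.sin (s ^ α) * S s) ^ 2 := by
            linear_combination (C s ^ 2 + S s ^ 2) * h2 + h1
          rw [this]; nlinarith [sq_nonneg (Real.cos (s ^ α) * C s + Real.sin (s ^ α) * S s)]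
        have h3 := (abs_le.1 this).1
        have h4 : 0 < s⁻¹ := inv_pos.2 sp
        nlinarith
    refine hmono.trans ?_
    rw [integral_inv_of_pos p1p p2p, ← hlogR]
    apply Real.log_le_log (by positivity)
    rw [div_le_iff₀ p1p]; exact hp21
  have e : 2 / m * (5 + B) / t0 = (3 / (2 * m)) * (5 + B) / t0 + (1 / (2 * m)) * (5 + B) / t0 := by
    field_simp; norm_num
  linarith

/-- The second derivative exists classically on the open half line. -/
lemma sol_deriv (t0 : ℝ) (b : ℝ → ℝ) (lam : ℝ) (u u' : ℝ → ℝ)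
    (hb : ContinuousOn b (Ici t0)) (hu : IsDampedSol t0 b lam u u') :
    ∀ s, t0 < s → HasDerivAt u' (-(b s * u' s + lam ^ 2 * u s)) s := by
  obtain ⟨hd, hc, w, hw, hi, hae⟩ := hu
  intro s hs
  set f : ℝ → ℝ := fun s => -(b s * u' s + lam ^ 2 * u s) with hf
  have huc : ContinuousOn u (Ici t0) := fun t ht => (hd t ht).continuousAt.continuousWithinAt
  have hfc : ContinuousOn f (Ici t0) := ((hb.mul hc).add (continuousOn_const.mul huc)).neg
  have heq : ∀ t ∈ Ici t0, u' t = u' t0 + ∫ s in t0..t, f s := by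
    intro t ht
    rw [hi t ht]
    congr 1
    apply intervalIntegral.integral_congr_ae
    have := (ae_restrict_iff' measurableSet_Ici).1 hae
    filter_upwards [this] with x hx hx2
    rw [uIoc_of_le ht] at hx2
    have := hx hx2.1.le
    simp only [hf]
    linarith
  have hsub : Ioi t0 ⊆ Ici t0 := Ioi_subset_Ici_self
  have hnhds : Ioi t0 ∈ nhds s := Ioi_mem_nhds hs
  have A : HasDerivAt (fun t => ∫ s in t0..t, f s) (f s) s := by
    apply integral_hasDerivAt_right
    · apply ContinuousOn.intervalIntegrable
      rw [uIcc_of_le hs.le]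
      exact hfc.mono Icc_subset_Ici_self
    · exact (hfc.mono hsub).stronglyMeasurableAtFilter isOpen_Ioi s hs
    · exact (hfc.mono hsub).continuousAt hnhds
  refine (A.const_add (u' t0)).congr_of_eventuallyEq ?_
  filter_upwards [hnhds] with t ht
  exact heq t (hsub ht)

theorem hyperbolic_regime_fast_oscillations
    (t0 a r α : ℝ) (ht0 : 0 < t0) (ha : 0 < a) (hr0 : 0 ≤ r) (hra : r ≤ a) (hα : 1 < α)
    (lam : ℝ) (hlam : 0 < lam)
    (u u' : ℝ → ℝ)
    (hu : IsDampedSol t0 (fun t => (a + r * Real.sin (t ^ α)) / t) lam u u') :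
    ∀ t ≥ t0,
      u' t ^ 2 + lam ^ 2 * u t ^ 2 ≤
        Real.exp ((2 * a * (a + r + 8) + 5 * r * (a + r + 4)) / (2 * lam * t0)
            + 3 * r / (α * t0 ^ α) + r * Real.log 3 / (α - 1)) *
          (u' t0 ^ 2 + lam ^ 2 * u t0 ^ 2) * (t0 / t) ^ a := by
  intro T hT
  have hT0 : 0 < T := by linarith
  have hα0 : 0 < α := by linarith
  have hpos' : ∀ s ∈ Ici t0, 0 < s := fun s hs => lt_of_lt_of_le ht0 hs
  set b : ℝ → ℝ := fun t => (a + r * Real.sin (t ^ α)) / t with hb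
  have hcontI : ContinuousOn (fun s : ℝ => s ^ α) (Ici t0) :=
    continuousOn_id.rpow_const (fun s hs => Or.inl (hpos' s hs).ne')
  have hsinI := Real.continuous_sin.comp_continuousOn hcontI
  have hbc : ContinuousOn b (Ici t0) :=
    (continuousOn_const.add (continuousOn_const.mul hsinI)).div continuousOn_id
      (fun s hs => (hpos' s hs).ne')
  have hdd := sol_deriv t0 b lam u u' hbc hu
  obtain ⟨hd, hc, -⟩ := hu
  have hsub : Icc t0 T ⊆ Ici t0 := Icc_subset_Ici_self
  have hpos : ∀ s ∈ Icc t0 T, 0 < s := fun s hs => hpos' s (hsub hs)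
  have hne : ∀ s ∈ Icc t0 T, s ≠ 0 := fun s hs => (hpos s hs).ne'
  have hu'c : ContinuousOn u' (Icc t0 T) := hc.mono hsub
  have huc : ContinuousOn u (Icc t0 T) :=
    fun t ht => (hd t (hsub ht)).continuousAt.continuousWithinAt
  have hb0 : ∀ s ∈ Icc t0 T, 0 ≤ b s := by
    intro s hs
    apply div_nonneg _ (hpos s hs).le
    nlinarith [Real.neg_one_le_sin (s ^ α)]
  have hbB : ∀ s ∈ Icc t0 T, |b s| ≤ (a + r) / s := by
    intro s hs
    rw [abs_of_nonneg (hb0 s hs)]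
    apply div_le_div_of_nonneg_right _ (hpos s hs).le
    nlinarith [Real.sin_le_one (s ^ α)]
  set E : ℝ → ℝ := fun s => u' s ^ 2 + lam ^ 2 * u s ^ 2 with hE
  have hEc : ContinuousOn E (Icc t0 T) := (hu'c.pow 2).add (continuousOn_const.mul (huc.pow 2))
  have hE0 : ∀ s, 0 ≤ E s := fun s => by simp only [hE]; positivity
  have hEd : ∀ s ∈ Ioo t0 T, HasDerivAt E (-2 * b s * u' s ^ 2) s := by
    intro s hs
    have h1 := hd s (hsub (Ioo_subset_Icc_self hs))
    have h2 := hdd s hs.1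
    refine ((h2.pow 2).add ((h1.pow 2).const_mul (lam ^ 2))).congr_deriv ?_
    push_cast
    ring
  have hanti : AntitoneOn E (Icc t0 T) := by
    refine antitoneOn_of_hasDerivWithinAt_nonpos (f' := fun s => -2 * b s * u' s ^ 2)
      (convex_Icc _ _) hEc ?_ ?_
    · intro s hs
      rw [interior_Icc] at hs
      exact (hEd s hs).hasDerivWithinAt
    · intro s hs
      rw [interior_Icc] at hs
      have := mul_nonneg (hb0 s (Ioo_subset_Icc_self hs)) (sq_nonneg (u' s))
      linarith
  have hmem0 : t0 ∈ Icc t0 T := ⟨le_rfl, hT⟩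
  have hmemT : T ∈ Icc t0 T := ⟨hT, le_rfl⟩
  change E T ≤ _ * E t0 * _
  rcases (hE0 T).eq_or_lt with hz | hETp
  · rw [← hz]
    have := hE0 t0
    have := Real.rpow_nonneg (div_pos ht0 hT0).le a
    positivity
  have hEp : ∀ s ∈ Icc t0 T, 0 < E s := fun s hs => hETp.trans_le (hanti hs hmemT hs.2)
  have hEne : ∀ s ∈ Icc t0 T, E s ≠ 0 := fun s hs => (hEp s hs).ne'
  set m := 2 * lam with hm
  have hmp : 0 < m := by positivity
  set C : ℝ → ℝ := fun s => (u' s ^ 2 - lam ^ 2 * u s ^ 2) / E s with hC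
  set S : ℝ → ℝ := fun s => (m * (u s * u' s)) / E s with hS
  have hCc : ContinuousOn C (Icc t0 T) :=
    ((hu'c.pow 2).sub (continuousOn_const.mul (huc.pow 2))).div hEc hEne
  have hSc : ContinuousOn S (Icc t0 T) := (continuousOn_const.mul (huc.mul hu'c)).div hEc hEne
  have hCS : ∀ s ∈ Icc t0 T, C s ^ 2 + S s ^ 2 = 1 := by
    intro s hs
    have := hEne s hs
    simp only [hC, hS]
    field_simp
    simp only [hE, hm]
    ring
  have hCd : ∀ s ∈ Ioo t0 T, HasDerivAt C (-(m + b s * S s) * S s) s := by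
    intro s hs
    have hs' := Ioo_subset_Icc_self hs
    have h1 := hd s (hsub hs')
    have h2 := hdd s hs.1
    have := hEne s hs'
    refine (((h2.pow 2).sub ((h1.pow 2).const_mul (lam ^ 2))).div (hEd s hs) this).congr_deriv ?_
    simp only [hS]
    field_simp
    simp only [hE, hm]
    simp
    ring
  have hSd : ∀ s ∈ Ioo t0 T, HasDerivAt S ((m + b s * S s) * C s) s := by
    intro s hs
    have hs' := Ioo_subset_Icc_self hs
    have h1 := hd s (hsub hs')
    have h2 := hdd s hs.1
    have := hEne s hs'
    refine (((h1.mul h2).const_mul m).div (hEd s hs) this).congr_deriv ?_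
    simp only [hS, hC]
    field_simp
    simp only [hE, hm]
    simp
    ring
  have hcont := hcontI.mono hsub
  have hsin := Real.continuous_sin.comp_continuousOn hcont
  have hcos := Real.continuous_cos.comp_continuousOn hcont
  have hBn : 0 ≤ a + r := by linarith
  have I1 := C_osc t0 T t0 (a + r) m ht0 le_rfl hT hmp hBn C S b hCc hSc hSd hCS hbB
  have I2 := phase_osc t0 T t0 m⁻¹ (a + r) α m ht0 le_rfl hT (by positivity) hBn hα C S b 1
    (Or.inl rfl) hCc hSc hCd hSd hCS hbB
    (fun s hs => by
      have := Real.rpow_pos_of_pos (hpos s hs) (α - 1)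
      positivity)
    (fun s hs => by
      have := Real.rpow_pos_of_pos (hpos s hs) (α - 1)
      rw [abs_of_pos (by positivity)]
      apply inv_anti₀ hmp
      have : 0 < α * s ^ (α - 1) := by positivity
      linarith)
  have I3 := Q_osc t0 T (a + r) α m ht0 hT hmp hBn hα C S b hCc hSc hCd hSd hCS hbB
  have I4 := sin_osc t0 T α ht0 hT hα
  have mkint : ∀ g : ℝ → ℝ, ContinuousOn g (Icc t0 T) → IntervalIntegrable g volume t0 T := by
    intro g hg
    apply ContinuousOn.intervalIntegrable
    rwa [uIcc_of_le hT]
  have i0 : IntervalIntegrable (fun s : ℝ => s⁻¹) volume t0 T :=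
    mkint _ (continuousOn_id.inv₀ hne)
  have i1 : IntervalIntegrable (fun s => -C s / s) volume t0 T :=
    mkint _ (hCc.neg.div continuousOn_id hne)
  have i2 : IntervalIntegrable
      (fun s => -(Real.sin (s ^ α) * C s + 1 * Real.cos (s ^ α) * S s) / s) volume t0 T :=
    mkint _ (((hsin.mul hCc).add ((continuousOn_const.mul hcos).mul hSc)).neg.div
      continuousOn_id hne)
  have i3 : IntervalIntegrable
      (fun s => -(Real.sin (s ^ α) * C s + (-1) * Real.cos (s ^ α) * S s) / s) volume t0 T :=
    mkint _ (((hsin.mul hCc).add ((continuousOn_const.mul hcos).mul hSc)).neg.div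
      continuousOn_id hne)
  have i4 : IntervalIntegrable (fun s => -Real.sin (s ^ α) / s) volume t0 T :=
    mkint _ (hsin.neg.div continuousOn_id hne)
  have hlog : ∫ s in t0..T, ((-a) * s⁻¹ + r * (-Real.sin (s ^ α) / s) + a * (-C s / s)
      + r / 2 * (-(Real.sin (s ^ α) * C s + 1 * Real.cos (s ^ α) * S s) / s)
      + r / 2 * (-(Real.sin (s ^ α) * C s + (-1) * Real.cos (s ^ α) * S s) / s))
      = Real.log (E T) - Real.log (E t0) := by
    refine integral_eq_sub_of_hasDerivAt_of_le hT (f := fun s => Real.log (E s))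
      (hEc.log hEne) ?_ ?_
    · intro s hs
      have hs' := Ioo_subset_Icc_self hs
      have hEs := hEne s hs'
      have hsn := hne s hs'
      refine ((hEd s hs).log hEs).congr_deriv ?_
      have hc2 : 2 * u' s ^ 2 / E s = 1 + C s := by
        simp only [hC]
        field_simp
        simp only [hE]
        ring
      have : -2 * b s * u' s ^ 2 / E s = - b s * (1 + C s) := by rw [← hc2]; ring
      rw [this]
      simp only [hb]
      field_simp
      ring
    · exact ((((i0.const_mul _).add (i4.const_mul _)).add (i1.const_mul _)).add
        (i2.const_mul _)).add (i3.const_mul _)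
  rw [intervalIntegral.integral_add ((((i0.const_mul _).add (i4.const_mul _)).add
        (i1.const_mul _)).add (i2.const_mul _)) (i3.const_mul _),
    intervalIntegral.integral_add (((i0.const_mul _).add (i4.const_mul _)).add
        (i1.const_mul _)) (i2.const_mul _),
    intervalIntegral.integral_add ((i0.const_mul _).add (i4.const_mul _)) (i1.const_mul _),
    intervalIntegral.integral_add (i0.const_mul _) (i4.const_mul _)] at hlog
  simp only [intervalIntegral.integral_const_mul] at hlog
  rw [integral_inv_of_pos ht0 hT0] at hlog
  have J1 := mul_le_mul_of_nonneg_left I1 ha.le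
  have J2 := mul_le_mul_of_nonneg_left I2 (by positivity : 0 ≤ r / 2)
  have J3 := mul_le_mul_of_nonneg_left I3 (by positivity : 0 ≤ r / 2)
  have J4 := mul_le_mul_of_nonneg_left I4 hr0
  set G := (2 * a * (a + r + 8) + 5 * r * (a + r + 4)) / (m * t0)
            + 3 * r / (α * t0 ^ α) + r * Real.log 3 / (α - 1) with hG
  have p0 := Real.rpow_pos_of_pos ht0 α
  have hbound : r * (2 / (α * t0 ^ α)) + a * (m⁻¹ * (5 + (a + r)) / t0)
      + r / 2 * (m⁻¹ * (5 + (a + r)) / t0)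
      + r / 2 * (2 / m * (5 + (a + r)) / t0 + 2 * Real.log 3 / (α - 1)) ≤ G := by
    have e1 : G - (r * (2 / (α * t0 ^ α)) + a * (m⁻¹ * (5 + (a + r)) / t0)
      + r / 2 * (m⁻¹ * (5 + (a + r)) / t0)
      + r / 2 * (2 / m * (5 + (a + r)) / t0 + 2 * Real.log 3 / (α - 1)))
      = r / (α * t0 ^ α) + (2 * a * (a + r + 8) + 5 * r * (a + r + 4)
          - a * (5 + (a + r)) - 3 / 2 * r * (5 + (a + r))) / (m * t0) := by
      have : α - 1 ≠ 0 := by linarith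
      rw [hG]; field_simp; ring
    have e2 : 0 ≤ r / (α * t0 ^ α) := by positivity
    have e3 : 0 ≤ (2 * a * (a + r + 8) + 5 * r * (a + r + 4)
          - a * (5 + (a + r)) - 3 / 2 * r * (5 + (a + r))) / (m * t0) := by
      apply div_nonneg _ (by positivity)
      nlinarith [mul_nonneg ha.le hr0, sq_nonneg a, sq_nonneg r]
    linarith
  have hfin : Real.log (E T) ≤ G + Real.log (E t0) + a * Real.log (t0 / T) := by
    have : Real.log (t0 / T) = - Real.log (T / t0) := by
      rw [← Real.log_inv, inv_div]
    rw [this]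
    linarith
  have hE0p := hEp t0 hmem0
  calc E T = Real.exp (Real.log (E T)) := (Real.exp_log hETp).symm
    _ ≤ Real.exp (G + Real.log (E t0) + a * Real.log (t0 / T)) := Real.exp_le_exp.2 hfin
    _ = Real.exp G * E t0 * (t0 / T) ^ a := by
      rw [Real.exp_add, Real.exp_add, Real.exp_log hE0p,
        Real.rpow_def_of_pos (div_pos ht0 hT0), mul_comm a]
end

section
/- Let t0 > 0, let λ ≥ 0, and let b(t) := (a + r·sin(t^α))/t for t ≥ t0, where a > 0, 0 ≤ r ≤ a and α > 1. Set μ := min{a, 2}, B := 3r/(α·t0^α), and Γ2 := exp( a(a+r+8) + 5r(a+r+4)/2 + 3r/(α·t0^α) + r·log 3/(α−1) ). Then every solution u of the damped oscillator equation u'' + b(t)u' + λ²u = 0 satisfies u'(t)² + λ²u(t)² ≤ Γ2·{4e^{2B}u'(t0)² + (λ² + 2/t0²)u(t0)²}·(t0/t)^μ for every t ≥ t0. -/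
open Real Set Filter MeasureTheory intervalIntegral

lemma le_of_deriv_aux {f : ℝ → ℝ} {x y : ℝ} (hxy : x ≤ y)
    (h : ∀ t ∈ Icc x y, ∃ d, HasDerivAt f d t ∧ d ≤ 0) : f y ≤ f x := by
  have hanti : AntitoneOn f (Icc x y) := by
    apply antitoneOn_of_deriv_nonpos (convex_Icc x y)
    · intro t ht
      obtain ⟨d, hd, _⟩ := h t ht
      exact hd.continuousAt.continuousWithinAt
    · intro t ht
      obtain ⟨d, hd, _⟩ := h t (interior_subset ht)
      exact hd.differentiableAt.differentiableWithinAt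
    · intro t ht
      obtain ⟨d, hd, h0⟩ := h t (interior_subset ht)
      rw [hd.deriv]; exact h0
  exact hanti ⟨le_rfl, hxy⟩ ⟨hxy, le_rfl⟩ hxy

lemma hasDerivAt_sinpow (α t : ℝ) (ht : 0 < t) :
    HasDerivAt (fun x : ℝ => sin (x ^ α)) (α * t ^ (α - 1) * cos (t ^ α)) t := by
  have := (Real.hasDerivAt_rpow_const (x := t) (p := α) (Or.inl ht.ne')).sin
  convert this using 1; ring

lemma hasDerivAt_cospow (α t : ℝ) (ht : 0 < t) :
    HasDerivAt (fun x : ℝ => cos (x ^ α)) (-(α * t ^ (α - 1) * sin (t ^ α))) t := by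
  have := (Real.hasDerivAt_rpow_const (x := t) (p := α) (Or.inl ht.ne')).cos
  convert this using 1; ring

/-- The oscillation correction. -/
lemma osc_deriv (r α t : ℝ) (ht : 0 < t) (hα : 1 < α) (hr0 : 0 ≤ r) :
    ∃ d, HasDerivAt (fun x : ℝ => r / α * x ^ (-α) * (1 - cos (x ^ α))) d t ∧
      d ≤ r * sin (t ^ α) / t := by
  have h1 := ((Real.hasDerivAt_rpow_const (x := t) (p := -α) (Or.inl ht.ne')).const_mul
    (r / α)).mul ((hasDerivAt_cospow α t ht).const_sub 1)
  refine ⟨_, h1, ?_⟩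
  have e1 : t ^ (-α) * t ^ (α - 1) = t⁻¹ := by
    rw [← Real.rpow_add ht, ← Real.rpow_neg_one]; congr 1; ring
  have hα0 : α ≠ 0 := by positivity
  have h2 : r / α * t ^ (-α) * - -(α * t ^ (α - 1) * sin (t ^ α)) = r * sin (t ^ α) / t := by
    have : r / α * t ^ (-α) * - -(α * t ^ (α - 1) * sin (t ^ α))
      = r * (α / α) * (t ^ (-α) * t ^ (α - 1)) * sin (t ^ α) := by ring
    rw [this, e1, div_self hα0]; field_simp
  rw [h2]
  have h3 : r / α * (-α * t ^ (-α - 1)) * (1 - cos (t ^ α)) ≤ 0 := by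
    have : r / α * (-α * t ^ (-α - 1)) * (1 - cos (t ^ α))
      = -(r * (α / α) * t ^ (-α - 1) * (1 - cos (t ^ α))) := by ring
    rw [this, div_self hα0]
    have := cos_le_one (t ^ α)
    have : 0 ≤ 1 - cos (t ^ α) := by linarith
    have : 0 ≤ t ^ (-α - 1) := by positivity
    have : 0 ≤ r * 1 * t ^ (-α - 1) * (1 - cos (t ^ α)) := by positivity
    linarith
  linarith

lemma damp_bounds (a r α t b : ℝ) (ht : 0 < t) (hr0 : 0 ≤ r) (hra : r ≤ a)
    (hb : b = (a + r * sin (t ^ α)) / t) : 0 ≤ b ∧ b ≤ (a + r) * t⁻¹ := by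
  have h1 := sin_le_one (t ^ α)
  have h2 := neg_one_le_sin (t ^ α)
  rw [hb, ← div_eq_mul_inv]
  constructor
  · apply div_nonneg _ ht.le; nlinarith
  · gcongr; nlinarith

lemma Qtwo_deriv (a r α lam t b : ℝ) (e l m : ℝ → ℝ) (ht : 0 < t) (hlam : 0 < lam)
    (ha : 0 < a) (hr0 : 0 ≤ r) (hra : r ≤ a) (hα : 1 < α)
    (hb : b = (a + r * sin (t ^ α)) / t)
    (he : HasDerivAt e (-b * (1 + l t)) t)
    (hm : HasDerivAt m (2 * lam * l t + b * m t * l t) t)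
    (h1 : l t ^ 2 + m t ^ 2 = 1) :
    ∃ d, HasDerivAt (fun x => e x + a * log x + a / (2 * lam) * (m x * x⁻¹)
        + (a * (a + r) / 4 + a / 2) / lam * x⁻¹
        + r / α * x ^ (-α) * (1 - cos (x ^ α))) d t ∧
      d ≤ -(r * sin (t ^ α) * t⁻¹) * l t := by
  obtain ⟨d0, hd0, hd0'⟩ := osc_deriv r α t ht hα hr0
  obtain ⟨hb0, hb1⟩ := damp_bounds a r α t b ht hr0 hra hb
  have hl := Real.hasDerivAt_log ht.ne'
  have hi := hasDerivAt_inv ht.ne'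
  refine ⟨_, (((he.add (hl.const_mul a)).add ((hm.mul hi).const_mul (a / (2 * lam)))).add
    (hi.const_mul ((a * (a + r) / 4 + a / 2) / lam))).add hd0, ?_⟩
  have hti : (t ^ 2)⁻¹ = t⁻¹ ^ 2 := by rw [inv_pow]
  rw [div_eq_mul_inv] at hd0' hb
  rw [hti]
  have hti0 : 0 < t⁻¹ := by positivity
  set i := t⁻¹
  set s := sin (t ^ α)
  have hlm : m t * l t ≤ 1 / 2 := by nlinarith [sq_nonneg (m t - l t)]
  have hm1 : -m t ≤ 1 := by nlinarith [sq_nonneg (l t), sq_nonneg (m t - 1)]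
  have k1 : b * (m t * l t) ≤ (a + r) * i * (1 / 2) := by
    calc b * (m t * l t) ≤ b * (1 / 2) := by gcongr
      _ ≤ _ := by gcongr
  have k2 : a / (2 * lam) * ((2 * lam * l t + b * m t * l t) * i + m t * -i ^ 2) ≤
      a * l t * i + a / (2 * lam) * ((a + r) * i ^ 2 * (1 / 2) + i ^ 2) := by
    have : a / (2 * lam) * ((2 * lam * l t + b * m t * l t) * i + m t * -i ^ 2)
      = a * l t * i + a / (2 * lam) * (b * (m t * l t) * i + -m t * i ^ 2) := by
      field_simp; ring
    rw [this]
    have : b * (m t * l t) * i + -m t * i ^ 2 ≤ (a + r) * i ^ 2 * (1 / 2) + i ^ 2 := by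
      have q1 := mul_le_mul_of_nonneg_right k1 hti0.le
      have q2 := mul_le_mul_of_nonneg_right hm1 (sq_nonneg i)
      nlinarith
    gcongr
  have k3 : (a * (a + r) / 4 + a / 2) / lam * -i ^ 2 =
      - (a / (2 * lam) * ((a + r) * i ^ 2 * (1 / 2) + i ^ 2)) := by
    field_simp; ring
  rw [k3]
  have k4 : -b * (1 + l t) + a * i + a * l t * i + r * s * i = -(r * s * i) * l t := by
    rw [hb]; ring
  linarith

lemma trig_bound (s c l m : ℝ) (h1 : s ^ 2 + c ^ 2 = 1) (h2 : l ^ 2 + m ^ 2 = 1) :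
    |s * l + c * m| ≤ 1 := by
  rw [← sq_le_one_iff_abs_le_one]
  nlinarith [sq_nonneg (s * m - c * l)]

/-- common ingredient: a product estimate. -/
lemma prod_bound (A b m U : ℝ) (hb0 : 0 ≤ b) (hbA : b ≤ A) (hm : |m| ≤ 1) (hU : |U| ≤ 1) :
    |b * m * U| ≤ A := by
  rw [abs_mul, abs_mul, abs_of_nonneg hb0]
  calc b * |m| * |U| ≤ b * 1 * 1 := by gcongr
    _ ≤ A := by linarith

lemma Nplus_deriv (K lam t b w1 : ℝ) (s c om l m : ℝ → ℝ) (ht : 0 < t) (hlam : 0 < lam)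
    (hb0 : 0 ≤ b) (hb1 : b ≤ K * t⁻¹)
    (hs : HasDerivAt s (om t * c t) t) (hc : HasDerivAt c (-(om t * s t)) t)
    (hom : HasDerivAt om w1 t) (hw1 : 0 ≤ w1) (hom0 : 0 ≤ om t)
    (hl : HasDerivAt l (-2 * lam * m t - b * m t ^ 2) t)
    (hm : HasDerivAt m (2 * lam * l t + b * m t * l t) t)
    (h1 : l t ^ 2 + m t ^ 2 = 1) (h2 : s t ^ 2 + c t ^ 2 = 1) :
    ∃ d, HasDerivAt (fun x => (om x + 2 * lam)⁻¹ * (1 - (c x * l x - s x * m x)) * x⁻¹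
        + K / (2 * lam) * x⁻¹) d t ∧
      d ≤ (s t * l t + c t * m t) * t⁻¹ := by
  have hi := hasDerivAt_inv ht.ne'
  have hpos : 0 < om t + 2 * lam := by positivity
  refine ⟨_, ((((hom.add_const (2 * lam)).inv hpos.ne').mul
    (((hc.mul hl).sub (hs.mul hm)).const_sub 1)).mul hi).add (hi.const_mul _), ?_⟩
  have hti : (t ^ 2)⁻¹ = t⁻¹ ^ 2 := by rw [inv_pow]
  simp only [Pi.mul_apply, Pi.sub_apply, Pi.inv_apply, div_eq_mul_inv, ← inv_pow, hti]
  have hti0 : 0 < t⁻¹ := by positivity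
  have hG0 : 0 < (om t + 2 * lam)⁻¹ := by positivity
  have hG1 : (om t + 2 * lam)⁻¹ ≤ (2 * lam)⁻¹ := by gcongr; linarith
  have hGe : (om t + 2 * lam)⁻¹ * (om t + 2 * lam) = 1 := inv_mul_cancel₀ hpos.ne'
  set i := t⁻¹
  set G := (om t + 2 * lam)⁻¹
  generalize s t = S at *
  generalize c t = C at *
  generalize l t = L at *
  generalize m t = M at *
  generalize om t = O at *
  have hU := trig_bound S C L M h2 h1
  have hM : |M| ≤ 1 := by rw [← sq_le_one_iff_abs_le_one]; nlinarith [sq_nonneg L]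
  have hX : |C * L + (-S) * M| ≤ 1 := trig_bound C (-S) L M (by nlinarith) h1
  have hp := (abs_le.1 (prod_bound _ b M (S * L + C * M) hb0 hb1 hM hU)).2
  have hX2 := (abs_le.1 hX).2
  have f1 : (-w1 * G ^ 2 * (1 - (C * L - S * M))) * i ≤ 0 := by
    have : 0 ≤ w1 * G ^ 2 * (1 - (C * L - S * M)) * i := by
      have : 0 ≤ 1 - (C * L - S * M) := by linarith
      positivity
    linarith
  have f2 : G * (1 - (C * L - S * M)) * i ^ 2 ≥ 0 := by
    have : 0 ≤ 1 - (C * L - S * M) := by linarith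
    positivity
  have f3 : G * (b * M * (S * L + C * M)) * i ≤ (2 * lam)⁻¹ * K * i ^ 2 := by
    have hKi : 0 ≤ K * i := hb0.trans hb1
    calc G * (b * M * (S * L + C * M)) * i ≤ G * (K * i) * i := by gcongr
      _ ≤ (2 * lam)⁻¹ * (K * i) * i := by gcongr
      _ = _ := by ring
  have f4 : G * -((-(O * S)) * L + C * (-2 * lam * M - b * M ^ 2) -
      (O * C * M + S * (2 * lam * L + b * M * L))) * i
      = (G * (O + 2 * lam)) * (S * L + C * M) * i + G * (b * M * (S * L + C * M)) * i := by ring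
  rw [hGe] at f4
  nlinarith

/-- region `ω ≤ λ` -/
lemma Nlow_deriv (K lam t b w1 : ℝ) (s c om l m : ℝ → ℝ) (ht : 0 < t) (hlam : 0 < lam)
    (hb0 : 0 ≤ b) (hb1 : b ≤ K * t⁻¹)
    (hs : HasDerivAt s (om t * c t) t) (hc : HasDerivAt c (-(om t * s t)) t)
    (hom : HasDerivAt om w1 t) (hw1 : 0 ≤ w1) (hreg : om t ≤ lam)
    (hl : HasDerivAt l (-2 * lam * m t - b * m t ^ 2) t)
    (hm : HasDerivAt m (2 * lam * l t + b * m t * l t) t)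
    (h1 : l t ^ 2 + m t ^ 2 = 1) (h2 : s t ^ 2 + c t ^ 2 = 1) :
    ∃ d, HasDerivAt (fun x => (2 * lam - om x)⁻¹ * ((c x * l x + s x * m x) - 1) * x⁻¹
        + (K + 2) / lam * x⁻¹) d t ∧
      d ≤ (s t * l t - c t * m t) * t⁻¹ := by
  have hi := hasDerivAt_inv ht.ne'
  have hpos : 0 < 2 * lam - om t := by linarith
  refine ⟨_, ((((hom.const_sub (2 * lam)).inv hpos.ne').mul
    (((hc.mul hl).add (hs.mul hm)).sub_const 1)).mul hi).add (hi.const_mul _), ?_⟩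
  have hti : (t ^ 2)⁻¹ = t⁻¹ ^ 2 := by rw [inv_pow]
  simp only [Pi.mul_apply, Pi.add_apply, Pi.inv_apply, div_eq_mul_inv, ← inv_pow, hti]
  have hti0 : 0 < t⁻¹ := by positivity
  have hG0 : 0 < (2 * lam - om t)⁻¹ := by positivity
  have hG1 : (2 * lam - om t)⁻¹ ≤ lam⁻¹ := by gcongr; linarith
  have hGe : (2 * lam - om t)⁻¹ * (2 * lam - om t) = 1 := inv_mul_cancel₀ hpos.ne'
  set i := t⁻¹
  set G := (2 * lam - om t)⁻¹
  generalize s t = S at *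
  generalize c t = C at *
  generalize l t = L at *
  generalize m t = M at *
  generalize om t = O at *
  have hU : |S * L + (-C) * M| ≤ 1 := trig_bound S (-C) L M (by nlinarith) h1
  have hM : |M| ≤ 1 := by rw [← sq_le_one_iff_abs_le_one]; nlinarith [sq_nonneg L]
  have hX : |C * L + S * M| ≤ 1 := trig_bound C S L M (by nlinarith) h1
  have hp := (abs_le.1 (prod_bound _ b M _ hb0 hb1 hM hU)).2
  obtain ⟨hX1, hX2⟩ := abs_le.1 hX
  have f1 : w1 * G ^ 2 * ((C * L + S * M) - 1) * i ≤ 0 := by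
    have : 0 ≤ w1 * G ^ 2 * (1 - (C * L + S * M)) * i := by
      have : 0 ≤ 1 - (C * L + S * M) := by linarith
      positivity
    linarith
  have f2 : G * (1 - (C * L + S * M)) * i ^ 2 ≤ lam⁻¹ * 2 * i ^ 2 := by
    have : 0 ≤ 1 - (C * L + S * M) := by linarith
    gcongr; linarith
  have f3 : G * (b * M * (S * L + (-C) * M)) * i ≤ lam⁻¹ * K * i ^ 2 := by
    have hKi : 0 ≤ K * i := hb0.trans hb1
    calc G * (b * M * (S * L + (-C) * M)) * i ≤ G * (K * i) * i := by gcongr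
      _ ≤ lam⁻¹ * (K * i) * i := by gcongr
      _ = _ := by ring
  have f4 : G * ((-(O * S)) * L + C * (-2 * lam * M - b * M ^ 2) +
      (O * C * M + S * (2 * lam * L + b * M * L))) * i
      = (G * (2 * lam - O)) * (S * L - C * M) * i + G * (b * M * (S * L + (-C) * M)) * i := by ring
  rw [hGe] at f4
  nlinarith

/-- region `ω ≥ 3λ` -/
lemma Nhigh_deriv (K lam t b w1 : ℝ) (s c om l m : ℝ → ℝ) (ht : 0 < t) (hlam : 0 < lam)
    (hb0 : 0 ≤ b) (hb1 : b ≤ K * t⁻¹)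
    (hs : HasDerivAt s (om t * c t) t) (hc : HasDerivAt c (-(om t * s t)) t)
    (hom : HasDerivAt om w1 t) (hw1 : 0 ≤ w1) (hreg : 3 * lam ≤ om t)
    (hl : HasDerivAt l (-2 * lam * m t - b * m t ^ 2) t)
    (hm : HasDerivAt m (2 * lam * l t + b * m t * l t) t)
    (h1 : l t ^ 2 + m t ^ 2 = 1) (h2 : s t ^ 2 + c t ^ 2 = 1) :
    ∃ d, HasDerivAt (fun x => (om x - 2 * lam)⁻¹ * (1 - (c x * l x + s x * m x)) * x⁻¹
        + K / lam * x⁻¹) d t ∧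
      d ≤ (s t * l t - c t * m t) * t⁻¹ := by
  have hi := hasDerivAt_inv ht.ne'
  have hpos : 0 < om t - 2 * lam := by linarith
  refine ⟨_, ((((hom.sub_const (2 * lam)).inv hpos.ne').mul
    (((hc.mul hl).add (hs.mul hm)).const_sub 1)).mul hi).add (hi.const_mul _), ?_⟩
  have hti : (t ^ 2)⁻¹ = t⁻¹ ^ 2 := by rw [inv_pow]
  simp only [Pi.mul_apply, Pi.add_apply, Pi.inv_apply, div_eq_mul_inv, ← inv_pow, hti]
  have hti0 : 0 < t⁻¹ := by positivity
  have hG0 : 0 < (om t - 2 * lam)⁻¹ := by positivity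
  have hG1 : (om t - 2 * lam)⁻¹ ≤ lam⁻¹ := by gcongr; linarith
  have hGe : (om t - 2 * lam)⁻¹ * (om t - 2 * lam) = 1 := inv_mul_cancel₀ hpos.ne'
  set i := t⁻¹
  set G := (om t - 2 * lam)⁻¹
  generalize s t = S at *
  generalize c t = C at *
  generalize l t = L at *
  generalize m t = M at *
  generalize om t = O at *
  have hU : |S * L + (-C) * M| ≤ 1 := trig_bound S (-C) L M (by nlinarith) h1
  have hM : |-M| ≤ 1 := by rw [← sq_le_one_iff_abs_le_one]; nlinarith [sq_nonneg L]
  have hX : |C * L + S * M| ≤ 1 := trig_bound C S L M (by nlinarith) h1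
  have hp := (abs_le.1 (prod_bound _ b (-M) _ hb0 hb1 hM hU)).2
  obtain ⟨hX1, hX2⟩ := abs_le.1 hX
  have f1 : -w1 * G ^ 2 * (1 - (C * L + S * M)) * i ≤ 0 := by
    have : 0 ≤ w1 * G ^ 2 * (1 - (C * L + S * M)) * i := by
      have : 0 ≤ 1 - (C * L + S * M) := by linarith
      positivity
    linarith
  have f2 : G * (1 - (C * L + S * M)) * i ^ 2 ≥ 0 := by
    have : 0 ≤ 1 - (C * L + S * M) := by linarith
    positivity
  have f3 : G * (b * (-M) * (S * L + (-C) * M)) * i ≤ lam⁻¹ * K * i ^ 2 := by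
    have hKi : 0 ≤ K * i := hb0.trans hb1
    calc G * (b * (-M) * (S * L + (-C) * M)) * i ≤ G * (K * i) * i := by gcongr
      _ ≤ lam⁻¹ * (K * i) * i := by gcongr
      _ = _ := by ring
  have f4 : G * -((-(O * S)) * L + C * (-2 * lam * M - b * M ^ 2) +
      (O * C * M + S * (2 * lam * L + b * M * L))) * i
      = (G * (O - 2 * lam)) * (S * L - C * M) * i + G * (b * (-M) * (S * L + (-C) * M)) * i := by
    ring
  rw [hGe] at f4
  nlinarith
/-- Polar data of the solution on an interval. -/
def PolarOn (a r α lam x y : ℝ) (e l m : ℝ → ℝ) : Prop :=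
  ∀ t ∈ Icc x y,
    HasDerivAt e (-((a + r * sin (t ^ α)) / t) * (1 + l t)) t ∧
    HasDerivAt l (-2 * lam * m t - (a + r * sin (t ^ α)) / t * m t ^ 2) t ∧
    HasDerivAt m (2 * lam * l t + (a + r * sin (t ^ α)) / t * m t * l t) t ∧
    l t ^ 2 + m t ^ 2 = 1

/-- The main functional. -/
noncomputable def QQ (a r α lam : ℝ) (e m : ℝ → ℝ) (x : ℝ) : ℝ :=
  e x + a * log x + a / (2 * lam) * (m x * x⁻¹)
        + (a * (a + r) / 4 + a / 2) / lam * x⁻¹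
        + r / α * x ^ (-α) * (1 - cos (x ^ α))

lemma om_deriv (α t : ℝ) (ht : 0 < t) (hα : 1 < α) :
    ∃ w1, HasDerivAt (fun x : ℝ => α * x ^ (α - 1)) w1 t ∧ 0 ≤ w1 := by
  refine ⟨_, (Real.hasDerivAt_rpow_const (x := t) (p := α - 1) (Or.inl ht.ne')).const_mul α, ?_⟩
  have : 0 ≤ α - 1 := by linarith
  positivity

lemma region_mid (a r α lam x y : ℝ) (e l m : ℝ → ℝ) (hx : 0 < x) (hxy : x ≤ y)
    (hlam : 0 < lam) (ha : 0 < a) (hr0 : 0 ≤ r) (hra : r ≤ a) (hα : 1 < α)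
    (H : PolarOn a r α lam x y e l m) :
    QQ a r α lam e m y - r * log y ≤ QQ a r α lam e m x - r * log x := by
  apply le_of_deriv_aux (f := fun t => QQ a r α lam e m t - r * log t) hxy
  intro t ht
  have ht0 : 0 < t := hx.trans_le ht.1
  obtain ⟨he, hl, hm, h1⟩ := H t ht
  obtain ⟨d, hd, hd'⟩ := Qtwo_deriv a r α lam t _ e l m ht0 hlam ha hr0 hra hα rfl he hm h1
  refine ⟨_, hd.sub ((Real.hasDerivAt_log ht0.ne').const_mul r), ?_⟩
  have hl1 : |l t| ≤ 1 := by rw [← sq_le_one_iff_abs_le_one]; nlinarith [sq_nonneg (m t)]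
  have hs1 : |sin (t ^ α)| ≤ 1 := abs_sin_le_one _
  have : |sin (t ^ α) * l t| ≤ 1 := by
    rw [abs_mul]; exact mul_le_one₀ hs1 (abs_nonneg _) hl1
  have h3 := (abs_le.1 this).1
  have h4 : 0 ≤ r * t⁻¹ := by positivity
  nlinarith

lemma Nplus_bound (K lam x om X : ℝ) (hx : 0 < x) (hlam : 0 < lam) (hK : 0 ≤ K)
    (hom : 0 ≤ om) (hX : |X| ≤ 1) :
    0 ≤ (om + 2 * lam)⁻¹ * (1 - X) * x⁻¹ + K / (2 * lam) * x⁻¹ ∧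
    (om + 2 * lam)⁻¹ * (1 - X) * x⁻¹ + K / (2 * lam) * x⁻¹ ≤ (1 + K / 2) / lam * x⁻¹ := by
  obtain ⟨h1, h2⟩ := abs_le.1 hX
  have h3 : 0 ≤ 1 - X := by linarith
  constructor
  · positivity
  · have : (om + 2 * lam)⁻¹ ≤ (2 * lam)⁻¹ := by gcongr; linarith
    calc (om + 2 * lam)⁻¹ * (1 - X) * x⁻¹ + K / (2 * lam) * x⁻¹
        ≤ (2 * lam)⁻¹ * 2 * x⁻¹ + K / (2 * lam) * x⁻¹ := by gcongr; linarith
      _ = _ := by field_simp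

lemma sincos_sq (z : ℝ) : sin z ^ 2 + cos z ^ 2 = 1 := sin_sq_add_cos_sq z

set_option maxHeartbeats 2000000 in
lemma region_low (a r α lam x y : ℝ) (e l m : ℝ → ℝ) (hx : 0 < x) (hxy : x ≤ y)
    (hlam : 0 < lam) (ha : 0 < a) (hr0 : 0 ≤ r) (hra : r ≤ a) (hα : 1 < α)
    (H : PolarOn a r α lam x y e l m) (hreg : ∀ t ∈ Icc x y, α * t ^ (α - 1) ≤ lam) :
    QQ a r α lam e m y ≤ QQ a r α lam e m x + r / 2 * ((5 + 3 / 2 * (a + r)) / lam * x⁻¹) := by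
  have key := le_of_deriv_aux (f := fun t => QQ a r α lam e m t + r / 2 *
    (((α * t ^ (α - 1) + 2 * lam)⁻¹ * (1 - (cos (t ^ α) * l t - sin (t ^ α) * m t)) * t⁻¹
        + (a + r) / (2 * lam) * t⁻¹) +
     ((2 * lam - α * t ^ (α - 1))⁻¹ * ((cos (t ^ α) * l t + sin (t ^ α) * m t) - 1) * t⁻¹
        + ((a + r) + 2) / lam * t⁻¹))) hxy (by
    intro t ht
    have ht0 : 0 < t := hx.trans_le ht.1
    obtain ⟨he, hl, hm, h1⟩ := H t ht
    obtain ⟨d, hd, hd'⟩ := Qtwo_deriv a r α lam t _ e l m ht0 hlam ha hr0 hra hα rfl he hm h1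
    obtain ⟨hb0, hb1⟩ := damp_bounds a r α t _ ht0 hr0 hra rfl
    obtain ⟨w1, hw, hw1⟩ := om_deriv α t ht0 hα
    obtain ⟨d2, hd2, hd2'⟩ := Nplus_deriv (a + r) lam t _ w1 (fun x => sin (x ^ α))
      (fun x => cos (x ^ α)) (fun x => α * x ^ (α - 1)) l m ht0 hlam hb0 hb1
      (hasDerivAt_sinpow α t ht0) (hasDerivAt_cospow α t ht0) hw hw1 (by positivity) hl hm h1
      (sincos_sq _)
    obtain ⟨d3, hd3, hd3'⟩ := Nlow_deriv (a + r) lam t _ w1 (fun x => sin (x ^ α))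
      (fun x => cos (x ^ α)) (fun x => α * x ^ (α - 1)) l m ht0 hlam hb0 hb1
      (hasDerivAt_sinpow α t ht0) (hasDerivAt_cospow α t ht0) hw hw1 (hreg t ht) hl hm h1
      (sincos_sq _)
    refine ⟨_, hd.add ((hd2.add hd3).const_mul (r / 2)), ?_⟩
    have : r / 2 * (d2 + d3) ≤ r / 2 * ((sin (t ^ α) * l t + cos (t ^ α) * m t) * t⁻¹ +
      (sin (t ^ α) * l t - cos (t ^ α) * m t) * t⁻¹) := by gcongr
    linarith)
  have hy : 0 < y := hx.trans_le hxy
  obtain ⟨-, -, -, h1x⟩ := H x ⟨le_rfl, hxy⟩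
  obtain ⟨-, -, -, h1y⟩ := H y ⟨hxy, le_rfl⟩
  have sx := sincos_sq (x ^ α)
  have sy := sincos_sq (y ^ α)
  have X1 := trig_bound (cos (x ^ α)) (-sin (x ^ α)) (l x) (m x) (by nlinarith) h1x
  have X2 := trig_bound (cos (y ^ α)) (-sin (y ^ α)) (l y) (m y) (by nlinarith) h1y
  have X3 := trig_bound (cos (x ^ α)) (sin (x ^ α)) (l x) (m x) (by nlinarith) h1x
  have X4 := trig_bound (cos (y ^ α)) (sin (y ^ α)) (l y) (m y) (by nlinarith) h1y
  rw [neg_mul, ← sub_eq_add_neg] at X1 X2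
  have B1 := (Nplus_bound (a + r) lam x (α * x ^ (α - 1)) _ hx hlam (by positivity)
    (by positivity) X1).2
  have B2 := (Nplus_bound (a + r) lam y (α * y ^ (α - 1)) _ hy hlam (by positivity)
    (by positivity) X2).1
  have rx := hreg x ⟨le_rfl, hxy⟩
  have ry := hreg y ⟨hxy, le_rfl⟩
  have B3 : (2 * lam - α * x ^ (α - 1))⁻¹ * ((cos (x ^ α) * l x + sin (x ^ α) * m x) - 1) * x⁻¹
        ≤ 0 := by
    have : 0 < 2 * lam - α * x ^ (α - 1) := by linarith
    have : 0 ≤ 1 - (cos (x ^ α) * l x + sin (x ^ α) * m x) := by linarith [(abs_le.1 X3).2]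
    have : 0 ≤ (2 * lam - α * x ^ (α - 1))⁻¹ * (1 - (cos (x ^ α) * l x + sin (x ^ α) * m x))
      * x⁻¹ := by positivity
    linarith
  have B4 : -(2 / lam * x⁻¹) ≤
      (2 * lam - α * y ^ (α - 1))⁻¹ * ((cos (y ^ α) * l y + sin (y ^ α) * m y) - 1) * y⁻¹ := by
    have h0 : 0 < 2 * lam - α * y ^ (α - 1) := by linarith
    have h1 : 0 ≤ 1 - (cos (y ^ α) * l y + sin (y ^ α) * m y) := by linarith [(abs_le.1 X4).2]
    have h2 : 1 - (cos (y ^ α) * l y + sin (y ^ α) * m y) ≤ 2 := by linarith [(abs_le.1 X4).1]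
    have h3 : (2 * lam - α * y ^ (α - 1))⁻¹ ≤ lam⁻¹ := by gcongr; linarith
    have : (2 * lam - α * y ^ (α - 1))⁻¹ * (1 - (cos (y ^ α) * l y + sin (y ^ α) * m y))
      * y⁻¹ ≤ lam⁻¹ * 2 * x⁻¹ := by gcongr
    rw [div_eq_mul_inv]
    linarith
  have B5 : 0 ≤ ((a + r) + 2) / lam * y⁻¹ := by positivity
  have B6 : (5 + 3 / 2 * (a + r)) / lam * x⁻¹ = (1 + (a + r) / 2) / lam * x⁻¹
    + ((a + r) + 2) / lam * x⁻¹ + 2 / lam * x⁻¹ := by field_simp; ring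
  have hr2 : 0 ≤ r / 2 := by positivity
  rw [B6]
  have C1 := mul_le_mul_of_nonneg_left (add_le_add B1 (add_le_add B3 (le_refl (((a + r) + 2) / lam * x⁻¹)))) hr2
  have C2 := mul_le_mul_of_nonneg_left (add_le_add B2 (add_le_add B4 B5)) hr2
  linarith

set_option maxHeartbeats 2000000 in
lemma region_high (a r α lam x y : ℝ) (e l m : ℝ → ℝ) (hx : 0 < x) (hxy : x ≤ y)
    (hlam : 0 < lam) (ha : 0 < a) (hr0 : 0 ≤ r) (hra : r ≤ a) (hα : 1 < α)
    (H : PolarOn a r α lam x y e l m) (hreg : ∀ t ∈ Icc x y, 3 * lam ≤ α * t ^ (α - 1)) :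
    QQ a r α lam e m y ≤ QQ a r α lam e m x + r / 2 * ((3 + 3 / 2 * (a + r)) / lam * x⁻¹) := by
  have key := le_of_deriv_aux (f := fun t => QQ a r α lam e m t + r / 2 *
    (((α * t ^ (α - 1) + 2 * lam)⁻¹ * (1 - (cos (t ^ α) * l t - sin (t ^ α) * m t)) * t⁻¹
        + (a + r) / (2 * lam) * t⁻¹) +
     ((α * t ^ (α - 1) - 2 * lam)⁻¹ * (1 - (cos (t ^ α) * l t + sin (t ^ α) * m t)) * t⁻¹
        + (a + r) / lam * t⁻¹))) hxy (by
    intro t ht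
    have ht0 : 0 < t := hx.trans_le ht.1
    obtain ⟨he, hl, hm, h1⟩ := H t ht
    obtain ⟨d, hd, hd'⟩ := Qtwo_deriv a r α lam t _ e l m ht0 hlam ha hr0 hra hα rfl he hm h1
    obtain ⟨hb0, hb1⟩ := damp_bounds a r α t _ ht0 hr0 hra rfl
    obtain ⟨w1, hw, hw1⟩ := om_deriv α t ht0 hα
    obtain ⟨d2, hd2, hd2'⟩ := Nplus_deriv (a + r) lam t _ w1 (fun x => sin (x ^ α))
      (fun x => cos (x ^ α)) (fun x => α * x ^ (α - 1)) l m ht0 hlam hb0 hb1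
      (hasDerivAt_sinpow α t ht0) (hasDerivAt_cospow α t ht0) hw hw1 (by positivity) hl hm h1
      (sincos_sq _)
    obtain ⟨d3, hd3, hd3'⟩ := Nhigh_deriv (a + r) lam t _ w1 (fun x => sin (x ^ α))
      (fun x => cos (x ^ α)) (fun x => α * x ^ (α - 1)) l m ht0 hlam hb0 hb1
      (hasDerivAt_sinpow α t ht0) (hasDerivAt_cospow α t ht0) hw hw1 (hreg t ht) hl hm h1
      (sincos_sq _)
    refine ⟨_, hd.add ((hd2.add hd3).const_mul (r / 2)), ?_⟩
    have : r / 2 * (d2 + d3) ≤ r / 2 * ((sin (t ^ α) * l t + cos (t ^ α) * m t) * t⁻¹ +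
      (sin (t ^ α) * l t - cos (t ^ α) * m t) * t⁻¹) := by gcongr
    linarith)
  have hy : 0 < y := hx.trans_le hxy
  obtain ⟨-, -, -, h1x⟩ := H x ⟨le_rfl, hxy⟩
  obtain ⟨-, -, -, h1y⟩ := H y ⟨hxy, le_rfl⟩
  have sx := sincos_sq (x ^ α)
  have sy := sincos_sq (y ^ α)
  have X1 := trig_bound (cos (x ^ α)) (-sin (x ^ α)) (l x) (m x) (by nlinarith) h1x
  have X2 := trig_bound (cos (y ^ α)) (-sin (y ^ α)) (l y) (m y) (by nlinarith) h1y
  have X3 := trig_bound (cos (x ^ α)) (sin (x ^ α)) (l x) (m x) (by nlinarith) h1x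
  have X4 := trig_bound (cos (y ^ α)) (sin (y ^ α)) (l y) (m y) (by nlinarith) h1y
  rw [neg_mul, ← sub_eq_add_neg] at X1 X2
  have B1 := (Nplus_bound (a + r) lam x (α * x ^ (α - 1)) _ hx hlam (by positivity)
    (by positivity) X1).2
  have B2 := (Nplus_bound (a + r) lam y (α * y ^ (α - 1)) _ hy hlam (by positivity)
    (by positivity) X2).1
  have rx := hreg x ⟨le_rfl, hxy⟩
  have ry := hreg y ⟨hxy, le_rfl⟩
  have B3 : 0 ≤ 
    (α * y ^ (α - 1) - 2 * lam)⁻¹ * (1 - (cos (y ^ α) * l y + sin (y ^ α) * m y)) * y⁻¹ := by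
    have : 0 < α * y ^ (α - 1) - 2 * lam := by linarith
    have : 0 ≤ 1 - (cos (y ^ α) * l y + sin (y ^ α) * m y) := by linarith [(abs_le.1 X4).2]
    positivity
  have B4 : (α * x ^ (α - 1) - 2 * lam)⁻¹ * (1 - (cos (x ^ α) * l x + sin (x ^ α) * m x)) * x⁻¹
      ≤ 2 / lam * x⁻¹ := by
    have h0 : 0 < α * x ^ (α - 1) - 2 * lam := by linarith
    have h1 : 0 ≤ 1 - (cos (x ^ α) * l x + sin (x ^ α) * m x) := by linarith [(abs_le.1 X3).2]
    have h2 : 1 - (cos (x ^ α) * l x + sin (x ^ α) * m x) ≤ 2 := by linarith [(abs_le.1 X3).1]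
    have h3 : (α * x ^ (α - 1) - 2 * lam)⁻¹ ≤ lam⁻¹ := by gcongr; linarith
    have : (α * x ^ (α - 1) - 2 * lam)⁻¹ * (1 - (cos (x ^ α) * l x + sin (x ^ α) * m x))
      * x⁻¹ ≤ lam⁻¹ * 2 * x⁻¹ := by gcongr
    rw [div_eq_mul_inv]
    linarith
  have B5 : 0 ≤ (a + r) / lam * y⁻¹ := by positivity
  have B6 : (3 + 3 / 2 * (a + r)) / lam * x⁻¹ = (1 + (a + r) / 2) / lam * x⁻¹
    + (a + r) / lam * x⁻¹ + 2 / lam * x⁻¹ := by field_simp; ring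
  have hr2 : 0 ≤ r / 2 := by positivity
  rw [B6]
  have C1 := mul_le_mul_of_nonneg_left
    (add_le_add B1 (add_le_add B4 (le_refl ((a + r) / lam * x⁻¹)))) hr2
  have C2 := mul_le_mul_of_nonneg_left (add_le_add B2 (add_le_add B3 B5)) hr2
  linarith
set_option maxHeartbeats 2000000 in
lemma high_assembly (a r α lam x y : ℝ) (e l m : ℝ → ℝ) (hx : 0 < x) (hxy : x ≤ y)
    (hlam : 0 < lam) (ha : 0 < a) (hr0 : 0 ≤ r) (hra : r ≤ a) (hα : 1 < α)
    (H : PolarOn a r α lam x y e l m) (hlx : 1 / 2 ≤ lam * x) :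
    e y + a * log y ≤ e x + a * log x + (a * (a + r + 8) + 5 * r * (a + r + 4) / 2
      + 2 * r / (α * x ^ α) + r * log 3 / (α - 1)) := by
  have hα1 : 0 < α - 1 := by linarith
  have hα0 : 0 < α := by linarith
  have hy : 0 < y := hx.trans_le hxy
  obtain ⟨τ, hτ⟩ : ∃ τ : ℝ, τ = (lam / α) ^ (1 / (α - 1)) := ⟨_, rfl⟩
  obtain ⟨τ', hτ'⟩ : ∃ τ : ℝ, τ = (3 * lam / α) ^ (1 / (α - 1)) := ⟨_, rfl⟩
  have hτ0 : 0 < τ := by rw [hτ]; positivity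
  have hτ'0 : 0 < τ' := by rw [hτ']; positivity
  have hτe : α * τ ^ (α - 1) = lam := by
    rw [hτ, ← Real.rpow_mul (by positivity), one_div_mul_cancel hα1.ne', Real.rpow_one]
    field_simp
  have hτ'e : α * τ' ^ (α - 1) = 3 * lam := by
    rw [hτ', ← Real.rpow_mul (by positivity), one_div_mul_cancel hα1.ne', Real.rpow_one]
    field_simp
  have hlog : log τ' - log τ = log 3 / (α - 1) := by
    rw [hτ, hτ', Real.log_rpow (by positivity), Real.log_rpow (by positivity),
      mul_div_assoc, Real.log_mul (by norm_num) (by positivity)]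
    field_simp; ring
  have hττ : τ ≤ τ' := by
    rw [hτ, hτ']
    apply Real.rpow_le_rpow (by positivity) _ (by positivity)
    gcongr; linarith
  obtain ⟨σ, hσ⟩ : ∃ σ : ℝ, σ = max x (min y τ) := ⟨_, rfl⟩
  obtain ⟨σ', hσ'⟩ : ∃ σ : ℝ, σ = max x (min y τ') := ⟨_, rfl⟩
  have h1 : x ≤ σ := by rw [hσ]; exact le_max_left _ _
  have h2 : σ ≤ σ' := by rw [hσ, hσ']; gcongr
  have h3 : σ' ≤ y := by rw [hσ']; exact max_le hxy (min_le_left _ _)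
  have hσ0 : 0 < σ := hx.trans_le h1
  have hσ'0 : 0 < σ' := hσ0.trans_le h2
  have hj : lam⁻¹ * x⁻¹ ≤ 2 := by
    rw [← mul_inv]
    calc (lam * x)⁻¹ ≤ (1 / 2)⁻¹ := by gcongr
      _ = 2 := by norm_num
  have hj0 : 0 < lam⁻¹ * x⁻¹ := by positivity
  have P1 : PolarOn a r α lam x σ e l m := fun t ht => H t ⟨ht.1, ht.2.trans (h2.trans h3)⟩
  have P2 : PolarOn a r α lam σ σ' e l m := fun t ht => H t ⟨h1.trans ht.1, ht.2.trans h3⟩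
  have P3 : PolarOn a r α lam σ' y e l m := fun t ht => H t ⟨(h1.trans h2).trans ht.1, ht.2⟩
  have G1 : QQ a r α lam e m σ ≤ QQ a r α lam e m x
      + r / 2 * ((5 + 3 / 2 * (a + r)) / lam * x⁻¹) := by
    rcases h1.eq_or_lt with h | h
    · rw [← h]
      have : 0 ≤ r / 2 * ((5 + 3 / 2 * (a + r)) / lam * x⁻¹) := by positivity
      linarith
    · apply region_low a r α lam x σ e l m hx h1 hlam ha hr0 hra hα P1
      intro t ht
      have : σ ≤ τ := by
        rw [hσ] at h ⊢
        rcases lt_max_iff.1 h with h | h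
        · exact absurd h (lt_irrefl _)
        · rw [max_eq_right h.le]; exact min_le_right _ _
      rw [← hτe]
      have ht0 : 0 ≤ t := hx.le.trans ht.1
      have : t ≤ τ := ht.2.trans this
      gcongr
  have G2 := region_mid a r α lam σ σ' e l m hσ0 h2 hlam ha hr0 hra hα P2
  have G2' : log σ' - log σ ≤ log 3 / (α - 1) := by
    rcases h2.eq_or_lt with h | h
    · rw [← h, sub_self]
      have := Real.log_nonneg (show (1 : ℝ) ≤ 3 by norm_num)
      positivity
    · rw [← hlog]
      have k1 : τ ≤ σ := by
        by_contra hc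
        push Not at hc
        have : y ≤ σ := by
          rw [hσ] at hc ⊢
          have := (max_lt_iff.1 hc).2
          rcases min_lt_iff.1 this with h | h
          · rw [min_eq_left h.le]; exact le_max_right _ _
          · exact absurd h (lt_irrefl _)
        linarith
      have k2 : σ' ≤ τ' := by
        have h' : x < σ' := h1.trans_lt h
        rw [hσ'] at h' ⊢
        rcases lt_max_iff.1 h' with h | h
        · exact absurd h (lt_irrefl _)
        · rw [max_eq_right h.le]; exact min_le_right _ _
      have := Real.log_le_log hτ0 k1
      have := Real.log_le_log hσ'0 k2
      linarith
  have G3 : QQ a r α lam e m y ≤ QQ a r α lam e m σ'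
      + r / 2 * ((3 + 3 / 2 * (a + r)) / lam * x⁻¹) := by
    rcases h3.eq_or_lt with h | h
    · rw [← h]
      have : 0 ≤ r / 2 * ((3 + 3 / 2 * (a + r)) / lam * x⁻¹) := by positivity
      linarith
    · have k := region_high a r α lam σ' y e l m hσ'0 h3 hlam ha hr0 hra hα P3 (by
        intro t ht
        have : τ' ≤ σ' := by
          by_contra hc
          push Not at hc
          have : y ≤ σ' := by
            rw [hσ'] at hc ⊢
            have := (max_lt_iff.1 hc).2
            rcases min_lt_iff.1 this with h | h
            · rw [min_eq_left h.le]; exact le_max_right _ _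
            · exact absurd h (lt_irrefl _)
          linarith
        rw [← hτ'e]
        have : τ' ≤ t := this.trans ht.1
        gcongr)
      refine k.trans ?_
      have : x ≤ σ' := h1.trans h2
      gcongr
  have E1 : e y + a * log y ≤ QQ a r α lam e m y := by
    unfold QQ
    obtain ⟨-, -, -, hh⟩ := H y ⟨hxy, le_rfl⟩
    have hm1 : -1 ≤ m y := by nlinarith [sq_nonneg (l y), sq_nonneg (m y + 1)]
    have c1 : 0 ≤ r / α * y ^ (-α) * (1 - cos (y ^ α)) := by
      have : 0 ≤ 1 - cos (y ^ α) := by linarith [cos_le_one (y ^ α)]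
      positivity
    have c2 : (a * (a + r) / 4 + a / 2) / lam * y⁻¹ =
      (a * (a + r) / 4) / lam * y⁻¹ + a / (2 * lam) * (1 * y⁻¹) := by field_simp
    have c3 : 0 ≤ (a * (a + r) / 4) / lam * y⁻¹ := by positivity
    have c4 : 0 ≤ a / (2 * lam) * ((m y + 1) * y⁻¹) := by
      have : 0 ≤ m y + 1 := by linarith
      positivity
    linarith
  have E2 : QQ a r α lam e m x ≤ e x + a * log x + (a + a * (a + r) / 4) * (lam⁻¹ * x⁻¹)
      + 2 * r / (α * x ^ α) := by
    unfold QQ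
    obtain ⟨-, -, -, hh⟩ := H x ⟨le_rfl, hxy⟩
    have hm1 : m x ≤ 1 := by nlinarith [sq_nonneg (l x), sq_nonneg (m x - 1)]
    have c1 : r / α * x ^ (-α) * (1 - cos (x ^ α)) ≤ 2 * r / (α * x ^ α) := by
      have : 1 - cos (x ^ α) ≤ 2 := by linarith [neg_one_le_cos (x ^ α)]
      calc r / α * x ^ (-α) * (1 - cos (x ^ α)) ≤ r / α * x ^ (-α) * 2 := by gcongr
        _ = _ := by rw [Real.rpow_neg hx.le]; field_simp
    have c2 : (a + a * (a + r) / 4) * (lam⁻¹ * x⁻¹) =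
      (a * (a + r) / 4 + a / 2) / lam * x⁻¹ + a / (2 * lam) * (1 * x⁻¹) := by field_simp; ring
    have c4 : 0 ≤ a / (2 * lam) * ((1 - m x) * x⁻¹) := by
      have : 0 ≤ 1 - m x := by linarith
      positivity
    linarith
  have D1 : r / 2 * ((5 + 3 / 2 * (a + r)) / lam * x⁻¹) =
      r / 2 * (5 + 3 / 2 * (a + r)) * (lam⁻¹ * x⁻¹) := by ring
  have D2 : r / 2 * ((3 + 3 / 2 * (a + r)) / lam * x⁻¹) =
      r / 2 * (3 + 3 / 2 * (a + r)) * (lam⁻¹ * x⁻¹) := by ring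
  have D3 : r / 2 * (5 + 3 / 2 * (a + r)) * (lam⁻¹ * x⁻¹) ≤ r / 2 * (5 + 3 / 2 * (a + r)) * 2 := by
    gcongr
  have D4 : r / 2 * (3 + 3 / 2 * (a + r)) * (lam⁻¹ * x⁻¹) ≤ r / 2 * (3 + 3 / 2 * (a + r)) * 2 := by
    gcongr
  have D5 : (a + a * (a + r) / 4) * (lam⁻¹ * x⁻¹) ≤ (a + a * (a + r) / 4) * 2 := by
    gcongr
  have D6 : r * (log σ' - log σ) ≤ r * log 3 / (α - 1) := by
    rw [mul_div_assoc]; gcongr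
  have D7 : r * (a + r) ≤ a * (a + r) := by gcongr
  rw [D1] at G1
  rw [D2] at G3
  nlinarith [mul_nonneg ha.le hr0, sq_nonneg a]

/-- Smooth form of the system. -/
def SolOn (a r α lam t0 : ℝ) (u v : ℝ → ℝ) : Prop :=
  ∀ t ≥ t0, HasDerivAt u (v t) t ∧
    HasDerivAt v (-((a + r * sin (t ^ α)) / t) * v t - lam ^ 2 * u t) t

lemma energy_deriv (a r α lam t0 : ℝ) (u v : ℝ → ℝ) (H : SolOn a r α lam t0 u v) (t : ℝ)
    (ht : t0 ≤ t) :
    HasDerivAt (fun t => v t ^ 2 + lam ^ 2 * u t ^ 2)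
      (-((a + r * sin (t ^ α)) / t) * (2 * v t ^ 2)) t := by
  obtain ⟨hu, hv⟩ := H t ht
  have := (hv.pow 2).add ((hu.pow 2).const_mul (lam ^ 2))
  refine this.congr_deriv ?_
  push_cast; ring

lemma energy_anti_s13 (a r α lam t0 x y : ℝ) (u v : ℝ → ℝ) (H : SolOn a r α lam t0 u v)
    (ht0 : 0 < t0) (hr0 : 0 ≤ r) (hra : r ≤ a) (hx : t0 ≤ x) (hxy : x ≤ y) :
    v y ^ 2 + lam ^ 2 * u y ^ 2 ≤ v x ^ 2 + lam ^ 2 * u x ^ 2 := by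
  apply le_of_deriv_aux (f := fun t => v t ^ 2 + lam ^ 2 * u t ^ 2) hxy
  intro t ht
  refine ⟨_, energy_deriv a r α lam t0 u v H t (hx.trans ht.1), ?_⟩
  have := (damp_bounds a r α t _ (ht0.trans_le (hx.trans ht.1)) hr0 hra rfl).1
  nlinarith [sq_nonneg (v t), mul_nonneg this (sq_nonneg (v t))]

lemma polar_of_sol (a r α lam t0 x y : ℝ) (u v : ℝ → ℝ) (H : SolOn a r α lam t0 u v)
    (ht0 : 0 < t0) (hr0 : 0 ≤ r) (hra : r ≤ a) (hx : t0 ≤ x)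
    (hy : 0 < v y ^ 2 + lam ^ 2 * u y ^ 2) :
    PolarOn a r α lam x y (fun t => log (v t ^ 2 + lam ^ 2 * u t ^ 2))
      (fun t => (v t ^ 2 - lam ^ 2 * u t ^ 2) / (v t ^ 2 + lam ^ 2 * u t ^ 2))
      (fun t => (2 * lam * (u t * v t)) / (v t ^ 2 + lam ^ 2 * u t ^ 2)) := by
  intro t ht
  have hE : 0 < v t ^ 2 + lam ^ 2 * u t ^ 2 :=
    hy.trans_le (energy_anti_s13 a r α lam t0 t y u v H ht0 hr0 hra (hx.trans ht.1) ht.2)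
  have hE' := energy_deriv a r α lam t0 u v H t (hx.trans ht.1)
  obtain ⟨hu, hv⟩ := H t (hx.trans ht.1)
  generalize (a + r * sin (t ^ α)) / t = b at *
  refine ⟨?_, ?_, ?_, ?_⟩
  · refine (hE'.log hE.ne').congr_deriv ?_
    field_simp; ring
  · refine (((hv.pow 2).sub ((hu.pow 2).const_mul (lam ^ 2))).div hE' hE.ne').congr_deriv ?_
    simp only [Pi.pow_apply, Pi.sub_apply]
    field_simp; push_cast; ring
  · refine (((hu.mul hv).const_mul (2 * lam)).div hE' hE.ne').congr_deriv ?_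
    simp only [Pi.mul_apply]
    field_simp; ring
  · field_simp; ring

lemma high_energy (a r α lam t0 x y : ℝ) (u v : ℝ → ℝ) (H : SolOn a r α lam t0 u v)
    (ht0 : 0 < t0) (hx : t0 ≤ x) (hxy : x ≤ y)
    (hlam : 0 < lam) (ha : 0 < a) (hr0 : 0 ≤ r) (hra : r ≤ a) (hα : 1 < α)
    (hlx : 1 / 2 ≤ lam * x) :
    v y ^ 2 + lam ^ 2 * u y ^ 2 ≤ Real.exp (a * (a + r + 8) + 5 * r * (a + r + 4) / 2
            + 3 * r / (α * t0 ^ α) + r * Real.log 3 / (α - 1)) *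
       (v x ^ 2 + lam ^ 2 * u x ^ 2) * (x / y) ^ a := by
  have hx0 : 0 < x := ht0.trans_le hx
  have hy0 : 0 < y := hx0.trans_le hxy
  have hEx0 : 0 ≤ v x ^ 2 + lam ^ 2 * u x ^ 2 := by positivity
  rcases (show 0 ≤ v y ^ 2 + lam ^ 2 * u y ^ 2 by positivity).eq_or_lt with h | h
  · rw [← h]; positivity
  have hP := polar_of_sol a r α lam t0 x y u v H ht0 hr0 hra hx h
  have hEx : 0 < v x ^ 2 + lam ^ 2 * u x ^ 2 :=
    h.trans_le (energy_anti_s13 a r α lam t0 x y u v H ht0 hr0 hra hx hxy)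
  have key := high_assembly a r α lam x y _ _ _ hx0 hxy hlam ha hr0 hra hα hP hlx
  have hB : 2 * r / (α * x ^ α) ≤ 3 * r / (α * t0 ^ α) := by
    have hα0 : 0 < α := by linarith
    gcongr
    linarith
  rw [← Real.log_le_log_iff h (by positivity), Real.log_mul (by positivity) (by positivity),
    Real.log_mul (by positivity) (by positivity), Real.log_exp, Real.log_rpow (by positivity),
    Real.log_div hx0.ne' hy0.ne']
  linarith
lemma exists_weight (a r α t0 : ℝ) (ht0 : 0 < t0) :
    ∃ p : ℝ → ℝ, p t0 = 1 ∧ ∀ t ≥ t0, 0 < p t ∧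
      HasDerivAt p ((a + r * sin (t ^ α)) / t * p t) t := by
  have hc : Continuous (fun t : ℝ => (a + r * sin ((max t t0) ^ α)) / max t t0) := by
    have h1 : Continuous (fun t : ℝ => max t t0) := by fun_prop
    have h0 : ∀ t : ℝ, max t t0 ≠ 0 := fun t => (ht0.trans_le (le_max_right _ _)).ne'
    have h2 : Continuous (fun t : ℝ => (max t t0) ^ α) :=
      h1.rpow_const (fun t => Or.inl (h0 t))
    exact (by fun_prop : Continuous (fun t : ℝ => a + r * sin ((max t t0) ^ α))).div h1 h0
  refine ⟨fun t => exp (∫ s in t0..t, (a + r * sin ((max s t0) ^ α)) / max s t0), by simp, ?_⟩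
  intro t ht
  refine ⟨exp_pos _, ?_⟩
  have h := (hc.integral_hasStrictDerivAt t0 t).hasDerivAt.exp
  simp only [max_eq_left ht] at h
  refine h.congr_deriv ?_
  ring

lemma weight_bound (a r α t0 s : ℝ) (p : ℝ → ℝ) (ht0 : 0 < t0) (hr0 : 0 ≤ r) (hα : 1 < α)
    (hp0 : p t0 = 1)
    (hp : ∀ t ≥ t0, 0 < p t ∧ HasDerivAt p ((a + r * sin (t ^ α)) / t * p t) t) (hs : t0 ≤ s) :
    1 / p s ≤ exp (2 * r / (α * t0 ^ α)) * (t0 / s) ^ a := by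
  have hs0 : 0 < s := ht0.trans_le hs
  have hα0 : 0 < α := by linarith
  have key := le_of_deriv_aux (f := fun x => r / α * x ^ (-α) * (1 - cos (x ^ α)) + a * log x
    - log (p x)) hs (by
    intro t ht
    have ht' : 0 < t := ht0.trans_le ht.1
    obtain ⟨d, hd, hd'⟩ := osc_deriv r α t ht' hα hr0
    obtain ⟨h1, h2⟩ := hp t ht.1
    refine ⟨_, (hd.add ((Real.hasDerivAt_log ht'.ne').const_mul a)).sub (h2.log h1.ne'), ?_⟩
    rw [mul_div_cancel_right₀ _ h1.ne', add_div, ← div_eq_mul_inv]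
    linarith)
  simp only [hp0, Real.log_one] at key
  have c0 : 0 ≤ r / α * s ^ (-α) * (1 - cos (s ^ α)) := by
    have : 0 ≤ 1 - cos (s ^ α) := by linarith [cos_le_one (s ^ α)]
    positivity
  have c1 : r / α * t0 ^ (-α) * (1 - cos (t0 ^ α)) ≤ 2 * r / (α * t0 ^ α) := by
    have : 1 - cos (t0 ^ α) ≤ 2 := by linarith [neg_one_le_cos (t0 ^ α)]
    calc r / α * t0 ^ (-α) * (1 - cos (t0 ^ α)) ≤ r / α * t0 ^ (-α) * 2 := by gcongr
      _ = _ := by rw [Real.rpow_neg ht0.le]; field_simp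
  have hps := (hp s hs).1
  rw [← Real.log_le_log_iff (by positivity) (by positivity), Real.log_mul (by positivity)
    (by positivity), Real.log_exp, Real.log_rpow (by positivity),
    Real.log_div ht0.ne' hs0.ne', one_div, Real.log_inv]
  linarith

lemma vel_bound (a r α lam t0 T K s : ℝ) (u v p : ℝ → ℝ) (H : SolOn a r α lam t0 u v)
    (ht0 : 0 < t0) (hr0 : 0 ≤ r) (hra : r ≤ a) (hp0 : p t0 = 1)
    (hp : ∀ t ≥ t0, 0 < p t ∧ HasDerivAt p ((a + r * sin (t ^ α)) / t * p t) t)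
    (hK0 : 0 ≤ K) (hK : ∀ t ∈ Icc t0 T, -u t ≤ K) (hs : s ∈ Icc t0 T) :
    v s ≤ |v t0| * (1 / p s) + lam ^ 2 * K * (s - t0) := by
  have key := le_of_deriv_aux (f := fun x => p x * v x - lam ^ 2 * K * ((x - t0) * p x)) hs.1 (by
    intro t ht
    have ht' : 0 < t := ht0.trans_le ht.1
    obtain ⟨h1, h2⟩ := hp t ht.1
    obtain ⟨hu, hv⟩ := H t ht.1
    have hb := (damp_bounds a r α t _ ht' hr0 hra rfl).1
    refine ⟨_, (h2.mul hv).sub ((((hasDerivAt_id t).sub_const t0).mul h2).const_mul _), ?_⟩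
    have hk := hK t ⟨ht.1, ht.2.trans hs.2⟩
    generalize (a + r * sin (t ^ α)) / t = b at *
    simp only [id]
    have q1 : 0 ≤ lam ^ 2 * p t * (K + u t) := by
      have : 0 ≤ K + u t := by linarith
      positivity
    have q2 : 0 ≤ lam ^ 2 * K * ((t - t0) * (b * p t)) := by
      have : 0 ≤ t - t0 := by linarith [ht.1]
      positivity
    nlinarith)
  simp only [hp0, sub_self] at key
  have hps := (hp s hs.1).1
  have h3 : p s * v s ≤ |v t0| + lam ^ 2 * K * ((s - t0) * p s) := by
    linarith [le_abs_self (v t0)]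
  have h4 : v s = (p s * v s) * (1 / p s) := by field_simp
  rw [h4]
  calc (p s * v s) * (1 / p s) ≤ (|v t0| + lam ^ 2 * K * ((s - t0) * p s)) * (1 / p s) := by gcongr
    _ = _ := by field_simp

lemma weight_interp (ν t0 s T : ℝ) (ht0 : 0 < t0) (hs : t0 ≤ s) (hsT : s ≤ T)
    (hν0 : 0 ≤ ν) (hν1 : ν ≤ 1) :
    (t0 / s) ^ (2 * ν) ≤ (t0 / T) ^ ν * ((1 - ν) + ν * (T * t0 * (s ^ 2)⁻¹)) := by
  have hs0 : 0 < s := ht0.trans_le hs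
  have hT0 : 0 < T := hs0.trans_le hsT
  have h := Real.geom_mean_le_arith_mean2_weighted (w₁ := 1 - ν) (w₂ := ν) (p₁ := 1)
    (p₂ := T * t0 * (s ^ 2)⁻¹) (by linarith) hν0 zero_le_one (by positivity) (by ring)
  rw [Real.one_rpow, one_mul, mul_one] at h
  have e : (t0 / s) ^ (2 * ν) = (t0 / T) ^ ν * (T * t0 * (s ^ 2)⁻¹) ^ ν := by
    rw [← Real.mul_rpow (by positivity) (by positivity), Real.rpow_mul (by positivity)]
    congr 1
    rw [Real.rpow_two]
    field_simp
  rw [e]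
  gcongr

lemma pos_bound (a r α lam t0 T K s ν : ℝ) (u v p : ℝ → ℝ) (H : SolOn a r α lam t0 u v)
    (ht0 : 0 < t0) (ha : 0 < a) (hr0 : 0 ≤ r) (hra : r ≤ a) (hα : 1 < α) (hp0 : p t0 = 1)
    (hp : ∀ t ≥ t0, 0 < p t ∧ HasDerivAt p ((a + r * sin (t ^ α)) / t * p t) t)
    (hν0 : 0 ≤ ν) (hν1 : ν ≤ 1) (hνa : 2 * ν ≤ a)
    (hK0 : 0 ≤ K) (hK : ∀ t ∈ Icc t0 T, -u t ≤ K) (hs : s ∈ Icc t0 T) :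
    u s ≤ u t0 + exp (2 * r / (α * t0 ^ α)) * |v t0| * (t0 / T) ^ ν * (T - t0)
      + lam ^ 2 * K * (T - t0) ^ 2 / 2 := by
  have hs0 : 0 < s := ht0.trans_le hs.1
  have hT0 : 0 < T := hs0.trans_le hs.2
  set z := exp (2 * r / (α * t0 ^ α)) * |v t0| with hz
  set h := (t0 / T) ^ ν with hh
  have hz0 : 0 ≤ z := by positivity
  have hh0 : 0 ≤ h := by positivity
  have key := le_of_deriv_aux (f := fun x => u x - (z * h * ((1 - ν) * (x - t0)
    + ν * (T * t0 * (-x⁻¹))) + lam ^ 2 * K / 2 * (x - t0) ^ 2)) hs.1 (by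
    intro t ht
    have ht' : 0 < t := ht0.trans_le ht.1
    have htT : t ∈ Icc t0 T := ⟨ht.1, ht.2.trans hs.2⟩
    have hd1 := (hasDerivAt_id t).sub_const t0
    have hi := (hasDerivAt_inv ht'.ne').neg
    refine ⟨_, (H t ht.1).1.sub ((((hd1.const_mul (1 - ν)).add ((hi.const_mul (T * t0)).const_mul
      ν)).const_mul (z * h)).add ((hd1.pow 2).const_mul (lam ^ 2 * K / 2))), ?_⟩
    have hv := vel_bound a r α lam t0 T K t u v p H ht0 hr0 hra hp0 hp hK0 hK htT
    have hw := weight_bound a r α t0 t p ht0 hr0 hα hp0 hp ht.1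
    have hi1 := weight_interp ν t0 t T ht0 ht.1 htT.2 hν0 hν1
    have hm : (t0 / t) ^ a ≤ (t0 / t) ^ (2 * ν) :=
      Real.rpow_le_rpow_of_exponent_ge (by positivity) ((div_le_one ht').2 ht.1) hνa
    have : |v t0| * (1 / p t) ≤ z * (h * ((1 - ν) + ν * (T * t0 * (t ^ 2)⁻¹))) := by
      calc |v t0| * (1 / p t) ≤ |v t0| * (exp (2 * r / (α * t0 ^ α)) * (t0 / t) ^ a) := by gcongr
        _ = z * (t0 / t) ^ a := by rw [hz]; ring
        _ ≤ _ := by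
          have := hm.trans hi1
          gcongr
    simp only [id]
    push_cast
    norm_num
    linarith)
  simp only [sub_self] at key
  have hTt : 0 ≤ T - t0 := by linarith [hs.1, hs.2]
  have k1 : (1 - ν) * (s - t0) + ν * (T * t0 * (-s⁻¹)) - ν * (T * t0 * (-t0⁻¹)) ≤ T - t0 := by
    have e1 : s⁻¹ ≥ T⁻¹ := by gcongr; exact hs.2
    have e2 : T * t0 * (-t0⁻¹) = -T := by field_simp
    have e3 : T * t0 * (-s⁻¹) ≤ -t0 := by
      have : T * t0 * (-T⁻¹) = -t0 := by field_simp
      rw [← this]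
      gcongr
    rw [e2]
    have : ν * (T * t0 * (-s⁻¹)) ≤ ν * (-t0) := by gcongr
    have : (1 - ν) * (s - t0) ≤ (1 - ν) * (T - t0) := by
      have : 0 ≤ 1 - ν := by linarith
      have := hs.2
      gcongr
    linarith
  have k2 : lam ^ 2 * K / 2 * (s - t0) ^ 2 ≤ lam ^ 2 * K / 2 * (T - t0) ^ 2 := by
    have : 0 ≤ s - t0 := by linarith [hs.1]
    have := hs.2
    gcongr
  have k3 := mul_le_mul_of_nonneg_left k1 (mul_nonneg hz0 hh0)
  nlinarith

lemma final_algebra (Z y : ℝ) :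
    (Z + (8 / 7 * (y + Z / 2)) / 2) ^ 2 + (8 / 7 * (y + Z / 2)) ^ 2 ≤ 4 * Z ^ 2 + 8 * y ^ 2 := by
  nlinarith [sq_nonneg (Z - y), sq_nonneg Z, sq_nonneg y]

set_option maxHeartbeats 2000000 in
lemma low_energy (a r α lam t0 T : ℝ) (u v : ℝ → ℝ) (H : SolOn a r α lam t0 u v)
    (ht0 : 0 < t0) (hT : t0 ≤ T)
    (hlam : 0 ≤ lam) (ha : 0 < a) (hr0 : 0 ≤ r) (hra : r ≤ a) (hα : 1 < α)
    (hlT : lam * T ≤ 1 / 2) :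
    v T ^ 2 + lam ^ 2 * u T ^ 2 ≤
       (4 * Real.exp (2 * (3 * r / (α * t0 ^ α))) * v t0 ^ 2 +
            (lam ^ 2 + 2 / t0 ^ 2) * u t0 ^ 2) * (t0 / T) ^ (min a 2) := by
  have hT0 : 0 < T := ht0.trans_le hT
  have hα0 : 0 < α := by linarith
  obtain ⟨p, hp0, hp⟩ := exists_weight a r α t0 ht0
  have hcont : ContinuousOn (fun t => |u t|) (Icc t0 T) := fun t ht =>
    ((H t ht.1).1.continuousAt.abs).continuousWithinAt
  obtain ⟨s, hs, hmax⟩ := isCompact_Icc.exists_isMaxOn ⟨t0, le_rfl, hT⟩ hcont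
  obtain ⟨K, hKdef⟩ : ∃ K, K = |u s| := ⟨_, rfl⟩
  have hK : ∀ t ∈ Icc t0 T, |u t| ≤ K := fun t ht => by rw [hKdef]; exact hmax ht
  have hK0 : 0 ≤ K := by rw [hKdef]; positivity
  have hKn : ∀ t ∈ Icc t0 T, -u t ≤ K := fun t ht => (neg_le_abs _).trans (hK t ht)
  have hKp : ∀ t ∈ Icc t0 T, -(-u t) ≤ K := fun t ht => by
    rw [neg_neg]; exact (le_abs_self _).trans (hK t ht)
  have Hn : SolOn a r α lam t0 (fun t => -u t) (fun t => -v t) := fun t ht => by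
    refine ⟨(H t ht).1.neg, (H t ht).2.neg.congr_deriv ?_⟩
    ring
  obtain ⟨ν, hν⟩ : ∃ ν, ν = min a 2 / 2 := ⟨_, rfl⟩
  have hmin0 : 0 < min a 2 := lt_min ha (by norm_num)
  have hν0 : 0 ≤ ν := by rw [hν]; positivity
  have hν1 : ν ≤ 1 := by rw [hν]; linarith [min_le_right a 2]
  have hνa : 2 * ν ≤ a := by rw [hν]; linarith [min_le_left a 2]
  have b1 := pos_bound a r α lam t0 T K s ν u v p H ht0 ha hr0 hra hα hp0 hp hν0 hν1 hνa hK0 hKn hs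
  have b2 := pos_bound a r α lam t0 T K s ν _ _ p Hn ht0 ha hr0 hra hα hp0 hp hν0 hν1 hνa hK0 hKp hs
  have hTm : T ∈ Icc t0 T := ⟨hT, le_rfl⟩
  have c1 := vel_bound a r α lam t0 T K T u v p H ht0 hr0 hra hp0 hp hK0 hKn hTm
  have c2 := vel_bound a r α lam t0 T K T _ _ p Hn ht0 hr0 hra hp0 hp hK0 hKp hTm
  have hw := weight_bound a r α t0 T p ht0 hr0 hα hp0 hp hT
  simp only [abs_neg] at b2 c2
  obtain ⟨z, hz⟩ : ∃ z, z = exp (2 * r / (α * t0 ^ α)) * |v t0| := ⟨_, rfl⟩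
  obtain ⟨h, hh⟩ : ∃ h, h = (t0 / T) ^ ν := ⟨_, rfl⟩
  rw [← hz, ← hh] at b1 b2
  have hz0 : 0 ≤ z := by rw [hz]; positivity
  have hh0 : 0 < h := by rw [hh]; positivity
  have hfrac : t0 / T ≤ 1 := (div_le_one hT0).2 hT
  have hh2 : h ^ 2 = (t0 / T) ^ (min a 2) := by
    rw [hh, ← Real.rpow_natCast, ← Real.rpow_mul (by positivity), hν]
    congr 1; push_cast; ring
  have hTt : 0 ≤ T - t0 := by linarith
  have hlT' : lam * (T - t0) ≤ 1 / 2 := by nlinarith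
  have hlT0 : 0 ≤ lam * (T - t0) := by positivity
  have hKb : K ≤ |u t0| + z * h * (T - t0) + lam ^ 2 * K * (T - t0) ^ 2 / 2 := by
    rw [hKdef] at b1 b2 ⊢
    apply abs_le.2 ⟨?_, ?_⟩
    · linarith [neg_le_abs (u t0)]
    · linarith [le_abs_self (u t0)]
  have hVb : |v T| ≤ |v t0| * (1 / p T) + lam ^ 2 * K * (T - t0) :=
    abs_le.2 ⟨by linarith, c1⟩
  have hVz : |v t0| * (1 / p T) ≤ z * h := by
    have hm : (t0 / T) ^ a ≤ (t0 / T) ^ ν :=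
      Real.rpow_le_rpow_of_exponent_ge (by positivity) hfrac (by linarith)
    calc |v t0| * (1 / p T) ≤ |v t0| * (exp (2 * r / (α * t0 ^ α)) * (t0 / T) ^ a) := by gcongr
      _ = z * (t0 / T) ^ a := by rw [hz]; ring
      _ ≤ z * h := by rw [hh]; gcongr
  -- scaled quantities
  obtain ⟨k, hk⟩ : ∃ k, k = lam * K := ⟨_, rfl⟩
  obtain ⟨y, hy⟩ : ∃ y, y = lam * |u t0| := ⟨_, rfl⟩
  obtain ⟨Z, hZ⟩ : ∃ Z, Z = z * h := ⟨_, rfl⟩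
  have hk0 : 0 ≤ k := by rw [hk]; positivity
  have hy0 : 0 ≤ y := by rw [hy]; positivity
  have hZ0 : 0 ≤ Z := by rw [hZ]; positivity
  have hk1 : k ≤ y + Z * (1 / 2) + k / 8 := by
    have e1 := mul_le_mul_of_nonneg_left hKb hlam
    have e2 : lam * (|u t0| + z * h * (T - t0) + lam ^ 2 * K * (T - t0) ^ 2 / 2)
      = y + Z * (lam * (T - t0)) + k * (lam * (T - t0)) ^ 2 / 2 := by
      rw [hy, hZ, hk]; ring
    have e3 : Z * (lam * (T - t0)) ≤ Z * (1 / 2) := by gcongr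
    have e4 : k * (lam * (T - t0)) ^ 2 ≤ k * (1 / 2) ^ 2 := by gcongr
    rw [e2, ← hk] at e1
    linarith
  have hk2 : k ≤ 8 / 7 * (y + Z / 2) := by linarith
  have hV2 : |v T| ≤ Z + k / 2 := by
    have e1 : lam ^ 2 * K * (T - t0) = k * (lam * (T - t0)) := by rw [hk]; ring
    have e3 : k * (lam * (T - t0)) ≤ k * (1 / 2) := by gcongr
    rw [e1] at hVb
    rw [hZ]
    linarith
  have hU2 : lam ^ 2 * u T ^ 2 ≤ k ^ 2 := by
    rw [hk, mul_pow, ← sq_abs (u T)]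
    have := hK T hTm
    gcongr
  have hV3 : v T ^ 2 ≤ (Z + k / 2) ^ 2 := by
    rw [← sq_abs (v T)]; gcongr
  have hfin : v T ^ 2 + lam ^ 2 * u T ^ 2 ≤ 4 * Z ^ 2 + 8 * y ^ 2 := by
    have e1 : (Z + k / 2) ^ 2 ≤ (Z + (8 / 7 * (y + Z / 2)) / 2) ^ 2 := by gcongr
    have e2 : k ^ 2 ≤ (8 / 7 * (y + Z / 2)) ^ 2 := by gcongr
    have e3 := final_algebra Z y
    linarith
  have f1 : 4 * Z ^ 2 ≤ 4 * Real.exp (2 * (3 * r / (α * t0 ^ α))) * v t0 ^ 2 * h ^ 2 := by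
    have e1 : Z ^ 2 = exp (2 * (2 * r / (α * t0 ^ α))) * v t0 ^ 2 * h ^ 2 := by
      rw [hZ, hz, mul_pow, mul_pow, sq_abs, ← Real.exp_nat_mul]; norm_num
    rw [e1]
    have : 2 * (2 * r / (α * t0 ^ α)) ≤ 2 * (3 * r / (α * t0 ^ α)) := by
      gcongr; norm_num
    have := Real.exp_le_exp.2 this
    have q : 0 ≤ v t0 ^ 2 * h ^ 2 := by positivity
    nlinarith
  have f2 : 8 * y ^ 2 ≤ 2 / t0 ^ 2 * u t0 ^ 2 * h ^ 2 := by
    have e0 : (t0 / T) ^ (2:ℕ) ≤ h ^ 2 := by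
      rw [hh2, ← Real.rpow_natCast]
      apply Real.rpow_le_rpow_of_exponent_ge (by positivity) hfrac
      push_cast; exact min_le_right _ _
    have e1 : 8 * y ^ 2 ≤ 2 / T ^ 2 * u t0 ^ 2 := by
      rw [hy, mul_pow, sq_abs]
      have : lam ^ 2 * 4 ≤ 1 / T ^ 2 := by
        rw [le_div_iff₀ (by positivity)]
        have : 0 ≤ lam * T := by positivity
        nlinarith
      have : 8 * lam ^ 2 ≤ 2 / T ^ 2 := by
        have e : 2 / T ^ 2 = 2 * (1 / T ^ 2) := by ring
        linarith
      have := mul_le_mul_of_nonneg_right this (sq_nonneg (u t0))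
      linarith
    calc 8 * y ^ 2 ≤ 2 / T ^ 2 * u t0 ^ 2 := e1
      _ = 2 / t0 ^ 2 * u t0 ^ 2 * (t0 / T) ^ 2 := by field_simp
      _ ≤ _ := by gcongr
  rw [← hh2]
  have f3 : 0 ≤ lam ^ 2 * u t0 ^ 2 * h ^ 2 := by positivity
  linarith

lemma sol_of_damped (t0 a r α lam : ℝ) (ht0 : 0 < t0) (u u' : ℝ → ℝ)
    (hu : IsDampedSol t0 (fun t => (a + r * Real.sin (t ^ α)) / t) lam u u') :
    ∃ v : ℝ → ℝ, (∀ t ≥ t0, v t = u' t) ∧ SolOn a r α lam t0 u v := by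
  obtain ⟨h1, h2, w, hw1, hw2, hw3⟩ := hu
  have hmc : Continuous (fun t : ℝ => max t t0) := by fun_prop
  have hmm : ∀ t : ℝ, max t t0 ∈ Ici t0 := fun t => mem_Ici.2 (le_max_right _ _)
  have hc : Continuous (fun t : ℝ => (a + r * sin ((max t t0) ^ α)) / max t t0) := by
    have h0 : ∀ t : ℝ, max t t0 ≠ 0 := fun t => (ht0.trans_le (le_max_right _ _)).ne'
    have h2 : Continuous (fun t : ℝ => (max t t0) ^ α) :=
      hmc.rpow_const (fun t => Or.inl (h0 t))
    exact (by fun_prop : Continuous (fun t : ℝ => a + r * sin ((max t t0) ^ α))).div hmc h0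
  have hcu' : Continuous (fun t : ℝ => u' (max t t0)) := h2.comp_continuous hmc hmm
  have huc : ContinuousOn u (Ici t0) := fun t ht => (h1 t ht).continuousAt.continuousWithinAt
  have hcu : Continuous (fun t : ℝ => u (max t t0)) := huc.comp_continuous hmc hmm
  have hg : Continuous (fun t : ℝ => -((a + r * sin ((max t t0) ^ α)) / max t t0) * u' (max t t0)
    - lam ^ 2 * u (max t t0)) := (hc.neg.mul hcu').sub (continuous_const.mul hcu)
  have hv : ∀ t ≥ t0, u' t0 + (∫ s in t0..t, (-((a + r * sin ((max s t0) ^ α)) / max s t0)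
      * u' (max s t0) - lam ^ 2 * u (max s t0))) = u' t := by
    intro t ht
    rw [hw2 t ht]
    congr 1
    apply intervalIntegral.integral_congr_ae
    rw [ae_restrict_iff' measurableSet_Ici] at hw3
    filter_upwards [hw3] with s hs hst
    rw [uIoc_of_le ht] at hst
    have := hs hst.1.le
    rw [max_eq_left hst.1.le]
    linarith
  refine ⟨_, hv, ?_⟩
  intro t ht
  refine ⟨?_, ?_⟩
  · beta_reduce
    rw [hv t ht]; exact h1 t ht
  · have hvt := hv t ht
    beta_reduce
    rw [hvt]
    have := ((hg.integral_hasStrictDerivAt t0 t).hasDerivAt).const_add (u' t0)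
    simpa only [max_eq_left ht] using this

theorem decay_fast_oscillations_ODE
    (t0 a r α lam : ℝ) (ht0 : 0 < t0) (ha : 0 < a) (hr0 : 0 ≤ r) (hra : r ≤ a)
    (hα : 1 < α) (hlam : 0 ≤ lam)
    (u u' : ℝ → ℝ)
    (hu : IsDampedSol t0 (fun t => (a + r * Real.sin (t ^ α)) / t) lam u u') :
    ∀ t ≥ t0,
      u' t ^ 2 + lam ^ 2 * u t ^ 2 ≤
        Real.exp (a * (a + r + 8) + 5 * r * (a + r + 4) / 2
            + 3 * r / (α * t0 ^ α) + r * Real.log 3 / (α - 1)) *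
          (4 * Real.exp (2 * (3 * r / (α * t0 ^ α))) * u' t0 ^ 2 +
            (lam ^ 2 + 2 / t0 ^ 2) * u t0 ^ 2) *
          (t0 / t) ^ (min a 2) := by
  intro t ht
  obtain ⟨v, hv, H⟩ := sol_of_damped t0 a r α lam ht0 u u' hu
  rw [← hv t ht, ← hv t0 le_rfl]
  have ht' : 0 < t := ht0.trans_le ht
  have hα0 : 0 < α := by linarith
  have hα1 : 0 < α - 1 := by linarith
  have hl3 := Real.log_nonneg (show (1 : ℝ) ≤ 3 by norm_num)
  have hexp0 : 0 ≤ a * (a + r + 8) + 5 * r * (a + r + 4) / 2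
            + 3 * r / (α * t0 ^ α) + r * Real.log 3 / (α - 1) := by positivity
  have hG := Real.one_le_exp hexp0
  have hB0 : 0 ≤ 2 * (3 * r / (α * t0 ^ α)) := by positivity
  have hB := Real.one_le_exp hB0
  have high := fun x hx hxy hlam hlx => high_energy a r α lam t0 x t u v H ht0 hx hxy hlam ha hr0
    hra hα hlx
  generalize Real.exp (a * (a + r + 8) + 5 * r * (a + r + 4) / 2
            + 3 * r / (α * t0 ^ α) + r * Real.log 3 / (α - 1)) = G at *
  have low := fun T hT hlT => low_energy a r α lam t0 T u v H ht0 hT hlam ha hr0 hra hα hlT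
  generalize Real.exp (2 * (3 * r / (α * t0 ^ α))) = B at *
  have hD0 : 0 ≤ 4 * B * v t0 ^ 2 + (lam ^ 2 + 2 / t0 ^ 2) * u t0 ^ 2 := by positivity
  have hG0 : 0 < G := by linarith
  have hED : v t0 ^ 2 + lam ^ 2 * u t0 ^ 2
      ≤ 4 * B * v t0 ^ 2 + (lam ^ 2 + 2 / t0 ^ 2) * u t0 ^ 2 := by
    have : 0 ≤ 2 / t0 ^ 2 * u t0 ^ 2 := by positivity
    nlinarith [sq_nonneg (v t0)]
  generalize 4 * B * v t0 ^ 2 + (lam ^ 2 + 2 / t0 ^ 2) * u t0 ^ 2 = D at *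
  have hmono : ∀ x, 0 < x → x ≤ t → (x / t) ^ a ≤ (x / t) ^ (min a 2) := fun x hx hxt =>
    Real.rpow_le_rpow_of_exponent_ge (by positivity) ((div_le_one ht').2 hxt) (min_le_left _ _)
  by_cases hc : lam * t ≤ 1 / 2
  · refine (low t ht hc).trans ?_
    have : D ≤ G * D := by nlinarith
    gcongr
  push Not at hc
  have hlam0 : 0 < lam := by
    rcases hlam.eq_or_lt with h | h
    · rw [← h] at hc; norm_num at hc
    · exact h
  by_cases hc0 : 1 / 2 ≤ lam * t0
  · refine (high t0 le_rfl ht hlam0 hc0).trans ?_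
    have := hmono t0 ht0 ht
    gcongr
  push Not at hc0
  have e1 : lam * (1 / (2 * lam)) = 1 / 2 := by field_simp
  have hx0 : t0 ≤ 1 / (2 * lam) := by
    rw [← e1] at hc0; exact (lt_of_mul_lt_mul_left hc0 hlam).le
  have hxt : 1 / (2 * lam) ≤ t := by
    rw [← e1] at hc; exact (lt_of_mul_lt_mul_left hc hlam).le
  have hlo := low _ hx0 e1.le
  have hhi := high _ hx0 hxt hlam0 e1.ge
  generalize 1 / (2 * lam) = x at *
  have hxpos : 0 < x := ht0.trans_le hx0
  have hm := hmono x hxpos hxt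
  have e2 : (t0 / t) ^ (min a 2) = (t0 / x) ^ (min a 2) * (x / t) ^ (min a 2) := by
    rw [← Real.mul_rpow (by positivity) (by positivity)]
    congr 1; field_simp
  rw [e2]
  calc _ ≤ _ := hhi
    _ ≤ G * (D * (t0 / x) ^ (min a 2)) * (x / t) ^ (min a 2) := by gcongr
    _ = _ := by ring
end
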